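/- arXiv:1809.02104 — 2 statements merged into one kernel-verified Lean document; each statement's English description precedes it below -/
import Mathlib

section
/- (Existence of adversarial examples, ℓ_p case) Let ρ be a probability density on [0,1]ⁿ with support S, and let R ⊂ [0,1]ⁿ be measurable with vol[R] < 1/2. Fix p > 0 and set p* = min(p,2). If vol[S] ≥ (1/2)·exp(-π·ε²·n^{1-2/p*}), then there exists a point x with ρ(x) > 0 and a point x̂ ∈ Rᶜ with ‖x - x̂‖_p ≤ ε. -/
open Real MeasureTheory

/-- The ℓ_p distance on ℝⁿ (for p > 0). -/
noncomputable def lpDist {n : ℕ} (p : ℝ) (x y : Fin n → ℝ) : ℝ :=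
  (∑ i, |x i - y i| ^ p) ^ (1 / p)

/-!
The proof rests on Gaussian isoperimetry, obtained by Bobkov's functional method. Write `φ`, `Φ`
for the standard normal density and distribution function, `Q = Φ⁻¹` and `I = φ ∘ Q`. Calculus
based on `I' = -Q` and `I I'' = -1` gives a two-point inequality for `I`, which tensorizes by
Minkowski's inequality to `I (𝔼 f) ≤ 𝔼 √(I(f)² + |Df|²)` for `[0, 1]`-valued `f` on the discrete
cube. The central limit theorem carries this over to the standard Gaussian measure `γ` on Euclidean
space. Applied to smooth cutoffs between a compact set `K` and its `δ`-thickening, it says that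
`Q (γ (K_s))` grows at rate at least `1` in `s`, so that `γ A ≥ Φ a` implies `γ (A_t) ≥ Φ (a + t)`.

The coordinatewise map `Φ` transports `γ` to the uniform measure on the cube and is
`(2π)^{-1/2}`-Lipschitz. Since `Φ (-t) ≤ exp (-t² / 2) / 2`, a subset of the cube of that volume has
a `(2π)^{-1/2} t`-neighbourhood of volume at least `1/2`, which therefore is not contained in `R`.
Finally `‖v‖_p ≤ n^{1/p* - 1/2} ‖v‖_2`, and one takes `t = √(2π) ε n^{1/2 - 1/p*}`.
-/

section

open ProbabilityTheory Filter Set Topology Metric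
open scoped ENNReal NNReal BigOperators

/-! ### The standard normal law and the Gaussian isoperimetric profile -/

/-- The density of the standard normal law on `ℝ`. -/
noncomputable abbrev stdNormalPDF : ℝ → ℝ := gaussianPDFReal 0 1

/-- The distribution function of the standard normal law on `ℝ`. -/
noncomputable abbrev stdNormalCDF : ℝ → ℝ := cdf (gaussianReal 0 1)

local notation "φ" => stdNormalPDF
local notation "Φ" => stdNormalCDF

/-- The quantile function `Φ⁻¹` of the standard normal law; its values outside `(0, 1)` are junk. -/
noncomputable def stdNormalQuantile : ℝ → ℝ := Function.invFun Φ

local notation "Q" => stdNormalQuantile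

/-- The isoperimetric profile `φ ∘ Φ⁻¹` of the Gaussian measures, extended by zero outside
`(0, 1)`. -/
noncomputable def gaussianProfile : ℝ → ℝ := (Ioo 0 1).indicator (φ ∘ Q)

local notation "I" => gaussianProfile
local notation "γ" => stdGaussian (EuclideanSpace ℝ _)

lemma stdNormalPDF_eq (x : ℝ) : φ x = (√(2 * π))⁻¹ * exp (-x ^ 2 / 2) := by
  simp [gaussianPDFReal]

lemma stdNormalPDF_pos (x : ℝ) : 0 < φ x := gaussianPDFReal_pos 0 1 x one_ne_zero

lemma stdNormalPDF_neg (x : ℝ) : φ (-x) = φ x := by simp [stdNormalPDF_eq]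

lemma stdNormalPDF_sub (x t : ℝ) : φ (x - t) = exp (x * t) * exp (-t ^ 2 / 2) * φ x := by
  rw [stdNormalPDF_eq, stdNormalPDF_eq, mul_left_comm, ← exp_add, ← exp_add]
  ring_nf

lemma stdNormalPDF_le_of_abs_le {x y : ℝ} (h : |x| ≤ |y|) : φ y ≤ φ x := by
  rw [stdNormalPDF_eq, stdNormalPDF_eq]
  gcongr _ * exp (-?_ / 2)
  exact sq_le_sq.2 h

lemma stdNormalPDF_le (x : ℝ) : φ x ≤ (√(2 * π))⁻¹ := by
  simpa [stdNormalPDF_eq] using stdNormalPDF_le_of_abs_le (x := 0) (y := x) (by simp)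

lemma stdNormalPDF_le_one (x : ℝ) : φ x ≤ 1 :=
  (stdNormalPDF_le x).trans <| inv_le_one_of_one_le₀ <| by
    rw [one_le_sqrt]
    linarith [pi_gt_three]

lemma hasDerivAt_stdNormalPDF (x : ℝ) : HasDerivAt φ (-x * φ x) x := by
  have hexponent : HasDerivAt (fun y : ℝ ↦ -y ^ 2 / 2) (-x) x := by
    convert! (hasDerivAt_pow 2 x).neg.div_const 2 using 1
    push_cast
    ring
  rw [funext stdNormalPDF_eq]
  convert! hexponent.exp.const_mul (√(2 * π))⁻¹ using 1
  ring

lemma continuous_stdNormalPDF : Continuous φ :=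
  continuous_iff_continuousAt.2 fun x ↦ (hasDerivAt_stdNormalPDF x).continuousAt

lemma tendsto_stdNormalPDF_atTop : Tendsto φ atTop (𝓝 0) := by
  have hsq : Tendsto (fun x : ℝ ↦ -x ^ 2 / 2) atTop atBot :=
    (tendsto_neg_atTop_atBot.comp (tendsto_pow_atTop two_ne_zero)).atBot_div_const two_pos
  rw [funext stdNormalPDF_eq]
  simpa using (tendsto_exp_atBot.comp hsq).const_mul (√(2 * π))⁻¹

lemma stdNormalCDF_eq_integral (x : ℝ) : Φ x = ∫ y in Iic x, φ y := by
  rw [stdNormalCDF, cdf_eq_real, measureReal_def, gaussianReal_apply_eq_integral 0 one_ne_zero,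
    ENNReal.toReal_ofReal (integral_nonneg fun y ↦ (stdNormalPDF_pos y).le)]

lemma hasDerivAt_stdNormalCDF (x : ℝ) : HasDerivAt Φ (φ x) x := by
  have h_int : Integrable φ := integrable_gaussianPDFReal 0 1
  have hΦ : Φ = fun x ↦ Φ 0 + ∫ y in (0 : ℝ)..x, φ y := by
    ext x
    rw [← intervalIntegral.integral_Iic_sub_Iic h_int.integrableOn h_int.integrableOn,
      ← stdNormalCDF_eq_integral, ← stdNormalCDF_eq_integral, add_sub_cancel]
  rw [hΦ]
  exact (continuous_stdNormalPDF.integral_hasStrictDerivAt 0 x).hasDerivAt.const_add _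

lemma continuous_stdNormalCDF : Continuous Φ :=
  continuous_iff_continuousAt.2 fun x ↦ (hasDerivAt_stdNormalCDF x).continuousAt

lemma strictMono_stdNormalCDF : StrictMono Φ :=
  strictMono_of_hasDerivAt_pos hasDerivAt_stdNormalCDF stdNormalPDF_pos

lemma stdNormalCDF_mem_Ioo (x : ℝ) : Φ x ∈ Ioo 0 1 :=
  ⟨(cdf_nonneg _ _).trans_lt (strictMono_stdNormalCDF (sub_one_lt x)),
    (strictMono_stdNormalCDF (lt_add_one x)).trans_le (cdf_le_one _ _)⟩

lemma stdNormalCDF_neg (x : ℝ) : Φ (-x) = 1 - Φ x := by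
  have := nullSingletonClass_gaussianReal (μ := 0) one_ne_zero
  have hsymm : (gaussianReal 0 1).real (Iic (-x)) = (gaussianReal 0 1).real (Ici x) := by
    conv_lhs => rw [← neg_zero, ← gaussianReal_map_neg]
    rw [map_measureReal_apply measurable_neg measurableSet_Iic]
    simp
  rw [stdNormalCDF, cdf_eq_real, cdf_eq_real, hsymm, ← compl_Iio,
    probReal_compl_eq_one_sub measurableSet_Iio, measureReal_congr Iio_ae_eq_Iic]

lemma stdNormalCDF_zero : Φ 0 = 1 / 2 := by
  linarith [neg_zero (G := ℝ) ▸ stdNormalCDF_neg 0]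

lemma stdNormalCDF_neg_le {t : ℝ} (ht : 0 ≤ t) : Φ (-t) ≤ 1 / 2 * exp (-t ^ 2 / 2) := by
  have h_int : Integrable φ := integrable_gaussianPDFReal 0 1
  have hshift : Φ (-t) = ∫ y in Iic 0, φ (y - t) := by
    rw [stdNormalCDF_eq_integral, ← (measurePreserving_sub_right volume t).setIntegral_preimage_emb
      (measurableEmbedding_subRight t)]
    simp
  calc Φ (-t) = ∫ y in Iic 0, φ (y - t) := hshift
    _ ≤ ∫ y in Iic 0, exp (-t ^ 2 / 2) * φ y := by
      refine setIntegral_mono_on (h_int.comp_sub_right t).integrableOn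
        (h_int.const_mul _).integrableOn measurableSet_Iic fun y hy ↦ ?_
      rw [stdNormalPDF_sub]
      gcongr
      · exact (stdNormalPDF_pos y).le
      · exact mul_le_of_le_one_left (exp_pos _).le
          (exp_le_one_iff.2 (mul_nonpos_of_nonpos_of_nonneg hy ht))
    _ = 1 / 2 * exp (-t ^ 2 / 2) := by
      rw [integral_const_mul, ← stdNormalCDF_eq_integral, stdNormalCDF_zero, mul_comm]

lemma stdNormalQuantile_stdNormalCDF (x : ℝ) : Q (Φ x) = x :=
  Function.leftInverse_invFun strictMono_stdNormalCDF.injective x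

lemma stdNormalCDF_stdNormalQuantile {p : ℝ} (hp : p ∈ Ioo 0 1) : Φ (Q p) = p := by
  apply Function.invFun_eq
  obtain ⟨a, ha⟩ := ((tendsto_cdf_atBot (gaussianReal 0 1)).eventually_lt_const hp.1).exists
  obtain ⟨b, hb⟩ := ((tendsto_cdf_atTop (gaussianReal 0 1)).eventually_const_lt hp.2).exists
  exact mem_range_of_exists_le_of_exists_ge continuous_stdNormalCDF ⟨a, ha.le⟩ ⟨b, hb.le⟩

lemma strictMonoOn_stdNormalQuantile : StrictMonoOn Q (Ioo 0 1) := by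
  intro p hp q hq hpq
  rwa [← strictMono_stdNormalCDF.lt_iff_lt, stdNormalCDF_stdNormalQuantile hp,
    stdNormalCDF_stdNormalQuantile hq]

lemma stdNormalQuantile_one_sub {p : ℝ} (hp : p ∈ Ioo 0 1) :
    Q (1 - p) = -Q p := by
  conv_lhs => rw [← stdNormalCDF_stdNormalQuantile hp, ← stdNormalCDF_neg,
    stdNormalQuantile_stdNormalCDF]

lemma continuousAt_stdNormalQuantile {p : ℝ} (hp : p ∈ Ioo 0 1) :
    ContinuousAt Q p := by
  refine strictMonoOn_stdNormalQuantile.continuousAt_of_image_mem_nhds (Ioo_mem_nhds hp.1 hp.2) ?_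
  have himage : Q '' Ioo 0 1 = univ := eq_univ_of_forall fun x ↦
    ⟨Φ x, stdNormalCDF_mem_Ioo x, stdNormalQuantile_stdNormalCDF x⟩
  exact himage ▸ univ_mem

lemma gaussianProfile_of_mem {p : ℝ} (hp : p ∈ Ioo 0 1) :
    I p = φ (Q p) :=
  indicator_of_mem hp _

lemma gaussianProfile_of_notMem {p : ℝ} (hp : p ∉ Ioo 0 1) : I p = 0 :=
  indicator_of_notMem hp _

lemma gaussianProfile_stdNormalCDF (x : ℝ) : I (Φ x) = φ x := by
  rw [gaussianProfile_of_mem (stdNormalCDF_mem_Ioo x), stdNormalQuantile_stdNormalCDF]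

lemma gaussianProfile_pos {p : ℝ} (hp : p ∈ Ioo 0 1) : 0 < I p :=
  gaussianProfile_of_mem hp ▸ stdNormalPDF_pos _

lemma gaussianProfile_nonneg (p : ℝ) : 0 ≤ I p :=
  indicator_nonneg (fun _ _ ↦ (stdNormalPDF_pos _).le) p

lemma gaussianProfile_le_one (p : ℝ) : I p ≤ 1 :=
  indicator_apply_le' (fun _ ↦ stdNormalPDF_le_one _) fun _ ↦ zero_le_one

lemma gaussianProfile_one_sub (p : ℝ) : I (1 - p) = I p := by
  by_cases hp : p ∈ Ioo 0 1
  · rw [gaussianProfile_of_mem hp, gaussianProfile_of_mem ⟨sub_pos.2 hp.2, sub_lt_self 1 hp.1⟩,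
      stdNormalQuantile_one_sub hp, stdNormalPDF_neg]
  · rw [gaussianProfile_of_notMem hp, gaussianProfile_of_notMem]
    exact fun h ↦ hp ⟨by linarith [h.2], by linarith [h.1]⟩

lemma hasDerivAt_stdNormalQuantile {p : ℝ} (hp : p ∈ Ioo 0 1) :
    HasDerivAt Q (I p)⁻¹ p := by
  rw [gaussianProfile_of_mem hp]
  refine HasDerivAt.of_local_left_inverse (continuousAt_stdNormalQuantile hp)
    (hasDerivAt_stdNormalCDF _) (stdNormalPDF_pos _).ne' ?_
  filter_upwards [Ioo_mem_nhds hp.1 hp.2] with q hq using stdNormalCDF_stdNormalQuantile hq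

lemma hasDerivAt_gaussianProfile {p : ℝ} (hp : p ∈ Ioo 0 1) :
    HasDerivAt I (-Q p) p := by
  have hcomp : I =ᶠ[𝓝 p] φ ∘ Q := by
    filter_upwards [Ioo_mem_nhds hp.1 hp.2] with q hq using gaussianProfile_of_mem hq
  convert! ((hasDerivAt_stdNormalPDF _).comp p
    (hasDerivAt_stdNormalQuantile hp)).congr_of_eventuallyEq hcomp using 1
  rw [← gaussianProfile_of_mem hp, mul_inv_cancel_right₀ (gaussianProfile_pos hp).ne']

lemma continuousAt_gaussianProfile_zero : ContinuousAt I 0 := by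
  rw [ContinuousAt, gaussianProfile_of_notMem (by simp), Metric.tendsto_nhds]
  intro ε hε
  obtain ⟨T, hT, hT0⟩ := ((tendsto_stdNormalPDF_atTop.eventually_lt_const hε).and
    (eventually_ge_atTop 0)).exists
  filter_upwards [gt_mem_nhds (stdNormalCDF_mem_Ioo (-T)).1] with p hpT
  rw [Real.dist_eq, sub_zero, abs_of_nonneg (gaussianProfile_nonneg p)]
  by_cases hp : p ∈ Ioo 0 1
  · have hQ : Q p < -T := by
      rwa [← strictMono_stdNormalCDF.lt_iff_lt, stdNormalCDF_stdNormalQuantile hp]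
    rw [gaussianProfile_of_mem hp]
    refine (stdNormalPDF_le_of_abs_le ?_).trans_lt hT
    rw [abs_of_nonneg hT0, abs_of_neg (by linarith)]
    linarith
  · rwa [gaussianProfile_of_notMem hp]

lemma continuous_gaussianProfile : Continuous I := by
  rw [continuous_iff_continuousAt]
  intro p
  by_cases hp : p ∈ Ioo 0 1
  · exact (hasDerivAt_gaussianProfile hp).continuousAt
  obtain rfl | rfl | hout : p = 0 ∨ p = 1 ∨ p ∉ Icc 0 1 := by
    by_cases h0 : p = 0 <;> by_cases h1 : p = 1 <;> grind
  · exact continuousAt_gaussianProfile_zero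
  · have hsymm : I ∘ (1 - ·) = I := funext gaussianProfile_one_sub
    rw [← hsymm]
    refine ContinuousAt.comp ?_ (by fun_prop)
    rw [sub_self]
    exact continuousAt_gaussianProfile_zero
  · refine continuousAt_const.congr (f := fun _ ↦ 0) ?_
    filter_upwards [isClosed_Icc.isOpen_compl.mem_nhds hout] with q hq
    exact (gaussianProfile_of_notMem fun h ↦ hq (Ioo_subset_Icc_self h)).symm

/-! ### Bobkov's two-point inequality -/

lemma apply_zero_le_of_hasDerivAt_nonneg {f f' : ℝ → ℝ} {b x : ℝ}
    (hf : ∀ y ∈ Ico 0 b, HasDerivAt f (f' y) y) (hf' : ∀ y ∈ Ico 0 b, 0 ≤ f' y)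
    (hx : x ∈ Ico 0 b) : f 0 ≤ f x :=
  monotoneOn_of_hasDerivWithinAt_nonneg (convex_Ico 0 b)
    (fun y hy ↦ (hf y hy).continuousAt.continuousWithinAt)
    (fun y hy ↦ (hf y (interior_subset hy)).hasDerivWithinAt)
    (fun y hy ↦ hf' y (interior_subset hy)) ⟨le_rfl, hx.1.trans_lt hx.2⟩ hx hx.1

lemma monotone_div_stdNormalPDF : Monotone fun x ↦ x / φ x := by
  refine monotone_of_hasDerivAt_nonneg (f' := fun x ↦ (1 + x ^ 2) / φ x) (fun x ↦ ?_)
    fun x ↦ div_nonneg (by positivity) (stdNormalPDF_pos x).le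
  have hφ := (stdNormalPDF_pos x).ne'
  convert! (hasDerivAt_id x).div (hasDerivAt_stdNormalPDF x) hφ using 1
  simp only [id]
  field_simp
  ring

lemma hasDerivAt_gaussianProfile_mul_stdNormalQuantile {p : ℝ} (hp : p ∈ Ioo 0 1) :
    HasDerivAt (fun p ↦ I p * Q p) (1 - Q p ^ 2) p := by
  convert! (hasDerivAt_gaussianProfile hp).mul (hasDerivAt_stdNormalQuantile hp) using 1
  rw [mul_inv_cancel₀ (gaussianProfile_pos hp).ne']
  ring

lemma hasDerivAt_gaussianProfile_sq {p : ℝ} (hp : p ∈ Ioo 0 1) :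
    HasDerivAt (fun p ↦ I p ^ 2) (-2 * (I p * Q p)) p := by
  convert! (hasDerivAt_gaussianProfile hp).pow 2 using 1
  push_cast
  ring

lemma hasDerivAt_stdNormalQuantile_sq {p : ℝ} (hp : p ∈ Ioo 0 1) :
    HasDerivAt (fun p ↦ Q p ^ 2) (2 * (Q p / I p)) p := by
  convert! (hasDerivAt_stdNormalQuantile hp).pow 2 using 1
  push_cast
  ring

section TwoPoint

variable {c x : ℝ}

lemma add_mem_Ioo_zero_one (hc : 1 / 2 ≤ c) (hx : x ∈ Ico 0 (1 - c)) : c + x ∈ Ioo 0 1 :=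
  ⟨by linarith [hx.1], by linarith [hx.2]⟩

lemma sub_mem_Ioo_zero_one (hc : 1 / 2 ≤ c) (hx : x ∈ Ico 0 (1 - c)) : c - x ∈ Ioo 0 1 :=
  ⟨by linarith [hx.2], by linarith [hx.1, hx.2]⟩

lemma stdNormalQuantile_sub_sq_le (hc : 1 / 2 ≤ c) (hx : x ∈ Ico 0 (1 - c)) :
    Q (c - x) ^ 2 ≤ Q (c + x) ^ 2 := by
  have hadd := add_mem_Ioo_zero_one hc hx
  have hsub := sub_mem_Ioo_zero_one hc hx
  have hle : Q (c - x) ≤ Q (c + x) :=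
    strictMonoOn_stdNormalQuantile.monotoneOn hsub hadd (by linarith [hx.1])
  have hneg_le : Q (1 - (c - x)) ≤ Q (c + x) :=
    strictMonoOn_stdNormalQuantile.monotoneOn ⟨by linarith [hsub.2], by linarith [hsub.1]⟩ hadd
      (by linarith)
  rw [stdNormalQuantile_one_sub hsub] at hneg_le
  exact sq_le_sq' (by linarith) hle

lemma gaussianProfile_add_sq_le (hc : 1 / 2 ≤ c) (hx : x ∈ Ico 0 (1 - c)) :
    I (c + x) ^ 2 ≤ I (c - x) ^ 2 := by
  have hle : I (c + x) ≤ I (c - x) := by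
    rw [gaussianProfile_of_mem (add_mem_Ioo_zero_one hc hx),
      gaussianProfile_of_mem (sub_mem_Ioo_zero_one hc hx)]
    exact stdNormalPDF_le_of_abs_le (sq_le_sq.1 (stdNormalQuantile_sub_sq_le hc hx))
  exact pow_le_pow_left₀ (gaussianProfile_nonneg _) hle 2

lemma gaussianProfile_mul_stdNormalQuantile_add_le (hc : 1 / 2 ≤ c) (hx : x ∈ Ico 0 (1 - c)) :
    I (c + x) * Q (c + x) + I (c - x) * Q (c - x) ≤ 2 * (I c * Q c) := by
  have hmono := apply_zero_le_of_hasDerivAt_nonneg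
    (f := fun y ↦ -(I (c + y) * Q (c + y) + I (c - y) * Q (c - y)))
    (fun y hy ↦ (((hasDerivAt_gaussianProfile_mul_stdNormalQuantile
      (add_mem_Ioo_zero_one hc hy)).comp_const_add c y).add
      ((hasDerivAt_gaussianProfile_mul_stdNormalQuantile
        (sub_mem_Ioo_zero_one hc hy)).comp_const_sub c y)).neg)
    (fun y hy ↦ by linarith [stdNormalQuantile_sub_sq_le hc hy]) hx
  simp only [add_zero, sub_zero] at hmono
  linarith

lemma gaussianProfile_sq_sub_le (hc : 1 / 2 ≤ c) (hx : x ∈ Ico 0 (1 - c)) :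
    I (c - x) ^ 2 - I (c + x) ^ 2 ≤ 4 * (I c * Q c) * x := by
  have hmono := apply_zero_le_of_hasDerivAt_nonneg
    (f := fun y ↦ 4 * (I c * Q c) * y - (I (c - y) ^ 2 - I (c + y) ^ 2))
    (fun y hy ↦ ((hasDerivAt_id y).const_mul _).sub
      (((hasDerivAt_gaussianProfile_sq (sub_mem_Ioo_zero_one hc hy)).comp_const_sub c y).sub
        ((hasDerivAt_gaussianProfile_sq (add_mem_Ioo_zero_one hc hy)).comp_const_add c y)))
    (fun y hy ↦ by linarith [gaussianProfile_mul_stdNormalQuantile_add_le hc hy]) hx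
  simp only [add_zero, sub_zero, mul_zero] at hmono
  linarith

lemma two_mul_stdNormalQuantile_sq_le (hc : 1 / 2 ≤ c) (hx : x ∈ Ico 0 (1 - c)) :
    2 * Q c ^ 2 ≤ Q (c + x) ^ 2 + Q (c - x) ^ 2 := by
  have hmono := apply_zero_le_of_hasDerivAt_nonneg
    (f := fun y ↦ Q (c + y) ^ 2 + Q (c - y) ^ 2)
    (fun y hy ↦
      ((hasDerivAt_stdNormalQuantile_sq (add_mem_Ioo_zero_one hc hy)).comp_const_add c y).add
        ((hasDerivAt_stdNormalQuantile_sq (sub_mem_Ioo_zero_one hc hy)).comp_const_sub c y))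
    (fun y hy ↦ by
      have hadd := add_mem_Ioo_zero_one hc hy
      have hsub := sub_mem_Ioo_zero_one hc hy
      have hle : Q (c - y) / I (c - y) ≤ Q (c + y) / I (c + y) := by
        rw [gaussianProfile_of_mem hadd, gaussianProfile_of_mem hsub]
        exact monotone_div_stdNormalPDF
          (strictMonoOn_stdNormalQuantile.monotoneOn hsub hadd (by linarith [hy.1]))
      linarith) hx
  simp only [add_zero, sub_zero] at hmono
  linarith

lemma stdNormalQuantile_sq_mul_le (hc : 1 / 2 ≤ c) (hx : x ∈ Ico 0 (1 - c)) :
    2 * Q c ^ 2 * x ≤ 2 * x + I (c - x) * Q (c - x) - I (c + x) * Q (c + x) := by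
  have hmono := apply_zero_le_of_hasDerivAt_nonneg
    (f := fun y ↦ 2 * y + (I (c - y) * Q (c - y) - I (c + y) * Q (c + y)) - 2 * Q c ^ 2 * y)
    (fun y hy ↦ (((hasDerivAt_id y).const_mul 2).add
      (((hasDerivAt_gaussianProfile_mul_stdNormalQuantile
        (sub_mem_Ioo_zero_one hc hy)).comp_const_sub c y).sub
        ((hasDerivAt_gaussianProfile_mul_stdNormalQuantile
          (add_mem_Ioo_zero_one hc hy)).comp_const_add c y))).sub
      ((hasDerivAt_id y).const_mul _))
    (fun y hy ↦ by linarith [two_mul_stdNormalQuantile_sq_le hc hy]) hx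
  simp only [add_zero, sub_zero, mul_zero] at hmono
  linarith

lemma two_mul_gaussianProfile_sq_add_le (hc : 1 / 2 ≤ c) (hx : x ∈ Ico 0 (1 - c)) :
    2 * I c ^ 2 + 2 * Q c ^ 2 * x ^ 2 ≤ I (c + x) ^ 2 + I (c - x) ^ 2 + 2 * x ^ 2 := by
  have hmono := apply_zero_le_of_hasDerivAt_nonneg
    (f := fun y ↦ I (c + y) ^ 2 + I (c - y) ^ 2 + (2 - 2 * Q c ^ 2) * y ^ 2)
    (fun y hy ↦ (((hasDerivAt_gaussianProfile_sq
      (add_mem_Ioo_zero_one hc hy)).comp_const_add c y).add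
      ((hasDerivAt_gaussianProfile_sq (sub_mem_Ioo_zero_one hc hy)).comp_const_sub c y)).add
      ((hasDerivAt_pow 2 y).const_mul _))
    (fun y hy ↦ by
      push_cast
      linarith [stdNormalQuantile_sq_mul_le hc hy]) hx
  simp only [add_zero, sub_zero] at hmono
  linarith

lemma two_mul_le_sqrt_add_sqrt {A B m : ℝ} (hA : 0 ≤ A) (hB : 0 ≤ B)
    (h : (B - A) ^ 2 ≤ 8 * m ^ 2 * (A + B - 2 * m ^ 2)) : 2 * m ≤ √A + √B := by
  have hAB : 4 * m ^ 2 - (A + B) ≤ 2 * √(A * B) := by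
    refine abs_le_of_sq_le_sq' ?_ (by positivity) |>.2
    rw [mul_pow, sq_sqrt (by positivity)]
    linarith
  refine abs_le_of_sq_le_sq' ?_ (by positivity) |>.2
  rw [add_sq, sq_sqrt hA, sq_sqrt hB, mul_assoc, ← sqrt_mul hA]
  linarith

lemma two_mul_gaussianProfile_le_of_half_le (hc : 1 / 2 ≤ c) (hx : x ∈ Ico 0 (1 - c)) :
    2 * I c ≤ √(I (c + x) ^ 2 + x ^ 2) + √(I (c - x) ^ 2 + x ^ 2) := by
  have hlower := sub_nonneg.2 (gaussianProfile_add_sq_le hc hx)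
  have hdiff := pow_le_pow_left₀ hlower (gaussianProfile_sq_sub_le hc hx) 2
  have hsum : 2 * Q c ^ 2 * x ^ 2 ≤ I (c + x) ^ 2 + I (c - x) ^ 2 + 2 * x ^ 2 - 2 * I c ^ 2 := by
    linarith [two_mul_gaussianProfile_sq_add_le hc hx]
  refine two_mul_le_sqrt_add_sqrt (by positivity) (by positivity) ?_
  calc (I (c - x) ^ 2 + x ^ 2 - (I (c + x) ^ 2 + x ^ 2)) ^ 2
      = (I (c - x) ^ 2 - I (c + x) ^ 2) ^ 2 := by ring
    _ ≤ (4 * (I c * Q c) * x) ^ 2 := hdiff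
    _ = 8 * I c ^ 2 * (2 * Q c ^ 2 * x ^ 2) := by ring
    _ ≤ 8 * I c ^ 2 * (I (c + x) ^ 2 + I (c - x) ^ 2 + 2 * x ^ 2 - 2 * I c ^ 2) := by gcongr
    _ = _ := by ring

end TwoPoint

lemma two_mul_gaussianProfile_midpoint_le_of_mem_Ioo {a b : ℝ} (ha : a ∈ Ioo 0 1)
    (hb : b ∈ Ioo 0 1) :
    2 * I ((a + b) / 2) ≤ √(I a ^ 2 + ((a - b) / 2) ^ 2) + √(I b ^ 2 + ((a - b) / 2) ^ 2) := by
  wlog hab : b ≤ a generalizing a b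
  · convert! this hb ha (by linarith) using 1 <;> ring_nf
  obtain hc | hc := le_total (1 / 2) ((a + b) / 2)
  · convert! two_mul_gaussianProfile_le_of_half_le hc (x := (a - b) / 2)
      ⟨by linarith, by linarith [ha.2]⟩ using 1
    ring_nf
  · rw [← gaussianProfile_one_sub, ← gaussianProfile_one_sub a, ← gaussianProfile_one_sub b]
    convert! two_mul_gaussianProfile_le_of_half_le (c := 1 - (a + b) / 2) (x := (a - b) / 2)
      (by linarith) ⟨by linarith, by linarith [hb.1]⟩ using 1
    ring_nf

lemma two_mul_gaussianProfile_midpoint_le {a b : ℝ} (ha : a ∈ Icc 0 1) (hb : b ∈ Icc 0 1) :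
    2 * I ((a + b) / 2) ≤ √(I a ^ 2 + ((a - b) / 2) ^ 2) + √(I b ^ 2 + ((a - b) / 2) ^ 2) := by
  have hI := continuous_gaussianProfile
  have hclosed : IsClosed {q : ℝ × ℝ | 2 * I ((q.1 + q.2) / 2) ≤
      √(I q.1 ^ 2 + ((q.1 - q.2) / 2) ^ 2) + √(I q.2 ^ 2 + ((q.1 - q.2) / 2) ^ 2)} :=
    isClosed_le (by fun_prop) (by fun_prop)
  have hsubset := closure_minimal (s := Ioo 0 1 ×ˢ Ioo 0 1)
    (fun q hq ↦ two_mul_gaussianProfile_midpoint_le_of_mem_Ioo hq.1 hq.2) hclosed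
  rw [closure_prod_eq, closure_Ioo zero_ne_one] at hsubset
  exact hsubset (show (a, b) ∈ _ from ⟨ha, hb⟩)

/-! ### Bobkov's inequality on the discrete cube -/

/-- The point of the discrete cube `{±1}^ι` obtained from `ω` by changing the sign of its `i`-th
coordinate. -/
def flipSign {ι : Type*} [DecidableEq ι] (ω : ι → ℤˣ) (i : ι) : ι → ℤˣ :=
  Function.update ω i (-ω i)

lemma sqrt_add_sq_add_sum_add_sq_le {ι : Type*} [Fintype ι] (u v : ℝ) (a b : ι → ℝ) :
    √((u + v) ^ 2 + ∑ i, (a i + b i) ^ 2) ≤ √(u ^ 2 + ∑ i, a i ^ 2) + √(v ^ 2 + ∑ i, b i ^ 2) := by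
  simpa [EuclideanSpace.norm_eq, Fintype.sum_option] using
    norm_add_le (WithLp.toLp 2 fun o : Option ι ↦ o.elim u a)
      (WithLp.toLp 2 fun o : Option ι ↦ o.elim v b)

lemma expect_fin_succ_units {n : ℕ} (F : (Fin (n + 1) → ℤˣ) → ℝ) :
    𝔼 ω, F ω = 𝔼 ω : Fin n → ℤˣ, (F (Fin.cons 1 ω) + F (Fin.cons (-1) ω)) / 2 := by
  rw [← Fintype.expect_equiv (Fin.consEquiv fun _ ↦ ℤˣ) (fun q ↦ F (Fin.cons q.1 q.2)) F
    fun q ↦ rfl, ← Finset.univ_product_univ, Finset.expect_product, Finset.expect_comm]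
  refine Finset.expect_congr rfl fun ω _ ↦ ?_
  rw [Fintype.expect_eq_sum_div_card, UnitsInt.univ, Finset.sum_pair (by decide)]
  simp

lemma flipSign_cons_zero {n : ℕ} (s : ℤˣ) (ω : Fin n → ℤˣ) :
    flipSign (Fin.cons s ω : Fin (n + 1) → ℤˣ) 0 = Fin.cons (-s) ω := by
  simp [flipSign]

lemma flipSign_cons_succ {n : ℕ} (s : ℤˣ) (ω : Fin n → ℤˣ) (i : Fin n) :
    flipSign (Fin.cons s ω : Fin (n + 1) → ℤˣ) i.succ = Fin.cons s (flipSign ω i) := by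
  simp [flipSign, Fin.cons_update]

lemma flipSign_comp_equiv {ι κ : Type*} [DecidableEq ι] [DecidableEq κ] (e : ι ≃ κ) (ω : κ → ℤˣ)
    (i : ι) : flipSign (ω ∘ e) i = flipSign ω (e i) ∘ e := by
  simp [flipSign, Function.update_comp_equiv]

lemma sqrt_gaussianProfile_average_sq_add_sum_le {ι : Type*} [Fintype ι] {a b : ℝ}
    (ha : a ∈ Icc 0 1) (hb : b ∈ Icc 0 1) (u v : ι → ℝ) :
    √(I ((a + b) / 2) ^ 2 + ∑ i, ((u i + v i) / 2) ^ 2) ≤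
      (√(I a ^ 2 + (((a - b) / 2) ^ 2 + ∑ i, u i ^ 2)) +
        √(I b ^ 2 + (((b - a) / 2) ^ 2 + ∑ i, v i ^ 2))) / 2 := by
  set A := √(I a ^ 2 + ((a - b) / 2) ^ 2)
  set B := √(I b ^ 2 + ((b - a) / 2) ^ 2) with hB
  have hmid : 2 * I ((a + b) / 2) ≤ A + B := by
    rw [hB, show ((b - a) / 2) ^ 2 = ((a - b) / 2) ^ 2 by ring]
    exact two_mul_gaussianProfile_midpoint_le ha hb
  have hscale : I ((a + b) / 2) ^ 2 + ∑ i, ((u i + v i) / 2) ^ 2 =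
      ((2 * I ((a + b) / 2)) ^ 2 + ∑ i, (u i + v i) ^ 2) / 2 ^ 2 := by
    simp only [div_pow, ← Finset.sum_div]
    ring
  rw [hscale, sqrt_div' _ (by positivity), sqrt_sq zero_le_two]
  gcongr
  calc √((2 * I ((a + b) / 2)) ^ 2 + ∑ i, (u i + v i) ^ 2)
      ≤ √((A + B) ^ 2 + ∑ i, (u i + v i) ^ 2) := by
        gcongr
        exact mul_nonneg zero_le_two (gaussianProfile_nonneg _)
    _ ≤ √(A ^ 2 + ∑ i, u i ^ 2) + √(B ^ 2 + ∑ i, v i ^ 2) :=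
        sqrt_add_sq_add_sum_add_sq_le _ _ _ _
    _ = _ := by rw [sq_sqrt (by positivity), sq_sqrt (by positivity), add_assoc, add_assoc]

lemma gaussianProfile_expect_fin_le {n : ℕ} {f : (Fin n → ℤˣ) → ℝ} (hf : ∀ ω, f ω ∈ Icc 0 1) :
    I (𝔼 ω, f ω) ≤ 𝔼 ω, √(I (f ω) ^ 2 + ∑ i, ((f ω - f (flipSign ω i)) / 2) ^ 2) := by
  induction n with
  | zero => simp [sqrt_sq (gaussianProfile_nonneg _)]
  | succ n ih =>
    have hmem (ω : Fin n → ℤˣ) : (f (Fin.cons 1 ω) + f (Fin.cons (-1) ω)) / 2 ∈ Icc 0 1 := by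
      have h₁ := hf (Fin.cons 1 ω)
      have h₂ := hf (Fin.cons (-1) ω)
      constructor <;> linarith [h₁.1, h₁.2, h₂.1, h₂.2]
    rw [expect_fin_succ_units, expect_fin_succ_units]
    refine (ih hmem).trans (Finset.expect_le_expect fun ω _ ↦ ?_)
    simp only [Fin.sum_univ_succ, flipSign_cons_zero, flipSign_cons_succ, neg_neg]
    convert! sqrt_gaussianProfile_average_sq_add_sum_le (hf (Fin.cons 1 ω)) (hf (Fin.cons (-1) ω))
      (fun i ↦ (f (Fin.cons 1 ω) - f (Fin.cons 1 (flipSign ω i))) / 2)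
      (fun i ↦ (f (Fin.cons (-1) ω) - f (Fin.cons (-1) (flipSign ω i))) / 2) using 6
    ring

theorem gaussianProfile_expect_le {ι : Type*} [Fintype ι] [DecidableEq ι] {f : (ι → ℤˣ) → ℝ}
    (hf : ∀ ω, f ω ∈ Icc 0 1) :
    I (𝔼 ω, f ω) ≤ 𝔼 ω, √(I (f ω) ^ 2 + ∑ i, ((f ω - f (flipSign ω i)) / 2) ^ 2) := by
  let e := Fintype.equivFin ι
  have hexpect (F : (ι → ℤˣ) → ℝ) : 𝔼 ω, F ω = 𝔼 ω, F (ω ∘ e) :=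
    (Fintype.expect_equiv (e.symm.arrowCongr (Equiv.refl ℤˣ)) _ _ fun ω ↦ rfl).symm
  rw [hexpect, hexpect]
  refine (gaussianProfile_expect_fin_le fun ω ↦ hf (ω ∘ e)).trans_eq ?_
  refine Finset.expect_congr rfl fun ω _ ↦ ?_
  rw [← e.sum_comp]
  simp only [flipSign_comp_equiv]

/-! ### Central limit theorem for normalized sums of signs -/

section CentralLimit

/-- The law of `X ω` when `ω` is uniformly distributed on the finite type `Ω`. -/
noncomputable def uniformLaw {Ω E : Type*} [Fintype Ω] [MeasurableSpace E] (X : Ω → E) :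
    Measure E :=
  ∑ ω, (Fintype.card Ω : ℝ≥0∞)⁻¹ • Measure.dirac (X ω)

instance isProbabilityMeasure_uniformLaw {Ω E : Type*} [Fintype Ω] [Nonempty Ω]
    [MeasurableSpace E] (X : Ω → E) : IsProbabilityMeasure (uniformLaw X) := by
  constructor
  simp [uniformLaw, Measure.finsetSum_apply, ENNReal.mul_inv_cancel]

lemma integral_uniformLaw {Ω E F : Type*} [Fintype Ω] [MeasurableSpace E]
    [MeasurableSingletonClass E] [NormedAddCommGroup F] [NormedSpace ℝ F] [CompleteSpace F]
    (X : Ω → E) (h : E → F) : ∫ x, h x ∂(uniformLaw X) = (Fintype.card Ω : ℝ)⁻¹ • ∑ ω, h (X ω) := by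
  rw [uniformLaw, integral_finsetSum_measure]
  · simp only [integral_smul_measure, integral_dirac, Finset.smul_sum, ENNReal.toReal_inv,
      ENNReal.toReal_natCast]
  · intro ω _
    have : Nonempty Ω := ⟨ω⟩
    exact (integrable_dirac (by simp)).smul_measure (by simp)

lemma integral_uniformLaw_eq_expect {Ω E : Type*} [Fintype Ω] [MeasurableSpace E]
    [MeasurableSingletonClass E] (X : Ω → E) (h : E → ℝ) :
    ∫ x, h x ∂(uniformLaw X) = 𝔼 ω, h (X ω) := by
  rw [integral_uniformLaw, Fintype.expect_eq_sum_div_card, smul_eq_mul, inv_mul_eq_div]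

variable {ι : Type*}

/-- The vector of `ℝ^ι` whose `i`-th coordinate is `N^{-1/2}` times the sum of the `N` signs
`ω (i, ·)`. -/
noncomputable def normalizedSignSum {N : ℕ} (ω : ι × Fin N → ℤˣ) : EuclideanSpace ℝ ι :=
  WithLp.toLp 2 fun i ↦ ∑ j, ((ω (i, j) : ℤ) : ℝ) / √N

lemma normalizedSignSum_flipSign [DecidableEq ι] {N : ℕ} (ω : ι × Fin N → ℤˣ) (q : ι × Fin N) :
    normalizedSignSum (flipSign ω q) =
      normalizedSignSum ω - (2 * ((ω q : ℤ) : ℝ) / √N) • EuclideanSpace.single q.1 1 := by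
  have hflip (r : ι × Fin N) : ((flipSign ω q r : ℤ) : ℝ) / √N =
      ((ω r : ℤ) : ℝ) / √N - if r = q then 2 * ((ω q : ℤ) : ℝ) / √N else 0 := by
    obtain rfl | hr := eq_or_ne r q
    · simp only [flipSign, Function.update_self, Units.val_neg, Int.cast_neg, if_true]
      ring
    · simp [flipSign, hr]
  ext i
  by_cases hi : i = q.1 <;>
    simp [normalizedSignSum, hflip, Finset.sum_sub_distrib, Prod.ext_iff, hi]

lemma tendsto_cos_div_sqrt_pow (t : ℝ) :
    Tendsto (fun N : ℕ ↦ cos (t / √N) ^ N) atTop (𝓝 (exp (-t ^ 2 / 2))) := by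
  have hscale : Tendsto (fun N : ℕ ↦ t / √N / 2) atTop (𝓝 0) := by
    simpa using
      ((tendsto_sqrt_atTop.comp tendsto_natCast_atTop_atTop).const_div_atTop t).div_const 2
  have hlim : Tendsto (fun N : ℕ ↦ -t ^ 2 / 2 * sinc (t / √N / 2) ^ 2) atTop (𝓝 (-t ^ 2 / 2)) := by
    simpa using (((continuous_sinc.tendsto 0).comp hscale).pow 2).const_mul (-t ^ 2 / 2)
  have hcos : Tendsto (fun N : ℕ ↦ N * (cos (t / √N) - 1)) atTop (𝓝 (-t ^ 2 / 2)) := by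
    refine hlim.congr' ?_
    filter_upwards [eventually_gt_atTop 0] with N hN
    have hN' : (0 : ℝ) < N := Nat.cast_pos.2 hN
    have hsinc (x : ℝ) : x * sinc x = sin x := by
      obtain rfl | hx := eq_or_ne x 0
      · simp
      · rw [sinc_of_ne_zero hx, mul_div_cancel₀ _ hx]
    rw [show t / √N = 2 * (t / √N / 2) by ring, cos_two_mul, cos_sq', ← hsinc,
      mul_div_cancel_left₀ _ two_ne_zero, mul_pow, div_pow, div_pow, sq_sqrt hN'.le]
    field_simp
    ring
  refine (tendsto_one_add_pow_exp_of_tendsto hcos).congr fun N ↦ ?_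
  rw [add_sub_cancel]

variable [Fintype ι] [DecidableEq ι]

lemma inv_card_smul_sum_prod_units (g : ι → ℤˣ → ℂ) :
    (Fintype.card (ι → ℤˣ) : ℝ)⁻¹ • ∑ ω : ι → ℤˣ, ∏ i, g i (ω i) =
      ∏ i, (g i 1 + g i (-1)) / 2 := by
  rw [← Fintype.prod_sum, Finset.prod_div_distrib]
  simp [inv_mul_eq_div]

lemma charFun_uniformLaw_normalizedSignSum (N : ℕ) (t : EuclideanSpace ℝ ι) :
    charFun (uniformLaw (normalizedSignSum (ι := ι) (N := N))) t =
      ((∏ i, cos (t i / √N) ^ N : ℝ) : ℂ) := by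
  have hexp (ω : ι × Fin N → ℤˣ) :
      Complex.exp ((inner ℝ (normalizedSignSum ω) t : ℝ) * Complex.I) =
        ∏ q, Complex.exp (((ω q : ℤ) * (t q.1 / √N) : ℝ) * Complex.I) := by
    rw [← Complex.exp_sum, ← Finset.sum_mul, ← Complex.ofReal_sum, Fintype.sum_prod_type]
    simp only [normalizedSignSum, PiLp.inner_apply, RCLike.inner_apply, conj_trivial,
      Finset.mul_sum]
    congr! 5
    ring
  simp only [charFun_apply, integral_uniformLaw, hexp]
  rw [inv_card_smul_sum_prod_units fun (q : ι × Fin N) (s : ℤˣ) ↦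
    Complex.exp (((s : ℤ) * (t q.1 / √N) : ℝ) * Complex.I), Fintype.prod_prod_type]
  simp [Complex.cos, div_pow]

lemma tendsto_integral_uniformLaw_normalizedSignSum
    (h : BoundedContinuousFunction (EuclideanSpace ℝ ι) ℝ) :
    Tendsto (fun N ↦ ∫ x, h x ∂(uniformLaw (normalizedSignSum (ι := ι) (N := N)))) atTop
      (𝓝 (∫ x, h x ∂(stdGaussian (EuclideanSpace ℝ ι)))) := by
  let law (N : ℕ) : ProbabilityMeasure (EuclideanSpace ℝ ι) :=
    ⟨uniformLaw (normalizedSignSum (N := N)), inferInstance⟩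
  let gaussian : ProbabilityMeasure (EuclideanSpace ℝ ι) :=
    ⟨stdGaussian (EuclideanSpace ℝ ι), inferInstance⟩
  suffices hlaw : Tendsto law atTop (𝓝 gaussian) from
    ProbabilityMeasure.tendsto_iff_forall_integral_tendsto.1 hlaw h
  refine ProbabilityMeasure.tendsto_of_tendsto_charFun fun t ↦ ?_
  have hgaussian : charFun (stdGaussian (EuclideanSpace ℝ ι)) t =
      ((∏ i, exp (-t i ^ 2 / 2) : ℝ) : ℂ) := by
    rw [charFun_stdGaussian, ← exp_sum, ← Finset.sum_div, Finset.sum_neg_distrib,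
      ← EuclideanSpace.real_norm_sq_eq]
    push_cast
    rfl
  simp only [law, gaussian, ProbabilityMeasure.coe_mk, charFun_uniformLaw_normalizedSignSum,
    hgaussian]
  exact (Complex.continuous_ofReal.tendsto _).comp
    (tendsto_finsetProd _ fun i _ ↦ tendsto_cos_div_sqrt_pow (t i))

end CentralLimit

/-! ### Bobkov's inequality for the Gaussian measure -/

section GaussianBobkov

variable {ι : Type*} [Fintype ι]

lemma sum_sq_apply_single_eq_norm_sq [DecidableEq ι] (A : EuclideanSpace ℝ ι →L[ℝ] ℝ) :
    ∑ i, A (EuclideanSpace.single i 1) ^ 2 = ‖A‖ ^ 2 := by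
  obtain ⟨a, rfl⟩ := (InnerProductSpace.toDual ℝ (EuclideanSpace ℝ ι)).surjective A
  simp [EuclideanSpace.real_norm_sq_eq, EuclideanSpace.inner_single_right]

lemma exists_forall_norm_sub_sub_fderiv_le {E F : Type*} [NormedAddCommGroup E] [NormedSpace ℝ E]
    [NormedAddCommGroup F] [NormedSpace ℝ F] {f : E → F} (hf : Differentiable ℝ f)
    (hf' : UniformContinuous (fderiv ℝ f)) {η : ℝ} (hη : 0 < η) :
    ∃ r > 0, ∀ x v, ‖v‖ < r → ‖f (x + v) - f x - fderiv ℝ f x v‖ ≤ η * ‖v‖ := by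
  obtain ⟨r, hr, hclose⟩ := Metric.uniformContinuous_iff.1 hf' η hη
  refine ⟨r, hr, fun x v hv ↦ ?_⟩
  simpa using (convex_ball x r).norm_image_sub_le_of_norm_hasFDerivWithin_le'
    (fun y _ ↦ (hf y).hasFDerivAt.hasFDerivWithinAt)
    (fun y hy ↦ (dist_eq_norm (fderiv ℝ f y) (fderiv ℝ f x) ▸ hclose hy).le)
    (mem_ball_self hr) (show x + v ∈ ball x r by simpa using hv)

variable {f : EuclideanSpace ℝ ι → ℝ}

section DecidableEq

variable [DecidableEq ι]

lemma sq_half_sub_flipSign_le {η r : ℝ}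
    (hexpand : ∀ x v, ‖v‖ < r → ‖f (x + v) - f x - fderiv ℝ f x v‖ ≤ η * ‖v‖)
    {N : ℕ} (hN : 2 / √N < r) (ω : ι × Fin N → ℤˣ) (q : ι × Fin N) :
    ((f (normalizedSignSum ω) - f (normalizedSignSum (flipSign ω q))) / 2) ^ 2 ≤
      (|fderiv ℝ f (normalizedSignSum ω) (EuclideanSpace.single q.1 1)| + η) ^ 2 / N := by
  set x := normalizedSignSum ω
  set D := fderiv ℝ f x (EuclideanSpace.single q.1 1)
  set h : ℝ := -(2 * ((ω q : ℤ) : ℝ) / √N) with hh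
  have habs : |h| = 2 / √N := by
    rcases Int.units_eq_one_or (ω q) with hs | hs <;> simp [hh, hs, abs_div, abs_of_nonneg]
  have hstep : |f (x + h • EuclideanSpace.single q.1 1) - f x - h * D| ≤ η * |h| := by
    have hnorm : ‖h • EuclideanSpace.single q.1 (1 : ℝ)‖ = |h| := by simp [norm_smul]
    have := hexpand x (h • EuclideanSpace.single q.1 1) (by rwa [hnorm, habs])
    rwa [map_smul, smul_eq_mul, hnorm] at this
  have hflip : normalizedSignSum (flipSign ω q) = x + h • EuclideanSpace.single q.1 1 := by
    rw [normalizedSignSum_flipSign, hh, neg_smul, sub_eq_add_neg]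
  have hdiff : |f (x + h • EuclideanSpace.single q.1 1) - f x| ≤ |h| * (|D| + η) := by
    have := abs_add_le (f (x + h • EuclideanSpace.single q.1 1) - f x - h * D) (h * D)
    rw [sub_add_cancel, abs_mul] at this
    linarith
  calc ((f x - f (normalizedSignSum (flipSign ω q))) / 2) ^ 2
      = |f (x + h • EuclideanSpace.single q.1 1) - f x| ^ 2 / 2 ^ 2 := by
        rw [hflip, sq_abs, div_pow, sub_sq_comm]
    _ ≤ (|h| * (|D| + η)) ^ 2 / 2 ^ 2 := by gcongr
    _ = (|D| + η) ^ 2 / N := by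
        rw [habs, mul_pow, div_pow, sq_sqrt N.cast_nonneg]
        ring

lemma sum_sq_half_sub_flipSign_le {η r : ℝ}
    (hexpand : ∀ x v, ‖v‖ < r → ‖f (x + v) - f x - fderiv ℝ f x v‖ ≤ η * ‖v‖)
    {N : ℕ} (hN₀ : N ≠ 0) (hN : 2 / √N < r) (ω : ι × Fin N → ℤˣ) :
    ∑ q, ((f (normalizedSignSum ω) - f (normalizedSignSum (flipSign ω q))) / 2) ^ 2 ≤
      ∑ i, (|fderiv ℝ f (normalizedSignSum ω) (EuclideanSpace.single i 1)| + η) ^ 2 := by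
  refine (Finset.sum_le_sum fun q _ ↦ sq_half_sub_flipSign_le hexpand hN ω q).trans_eq ?_
  have : (N : ℝ) ≠ 0 := Nat.cast_ne_zero.2 hN₀
  simp [Fintype.sum_prod_type, mul_div_cancel₀, this]

/-- The right-hand side of Bobkov's inequality for `f` at `x`, with every partial derivative
increased by `η` in absolute value. -/
noncomputable def bobkovIntegrand (f : EuclideanSpace ℝ ι → ℝ) (η : ℝ) (x : EuclideanSpace ℝ ι) :
    ℝ :=
  √(I (f x) ^ 2 + ∑ i, (|fderiv ℝ f x (EuclideanSpace.single i 1)| + η) ^ 2)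

lemma bobkovIntegrand_zero (f : EuclideanSpace ℝ ι → ℝ) (x : EuclideanSpace ℝ ι) :
    bobkovIntegrand f 0 x = √(I (f x) ^ 2 + ‖fderiv ℝ f x‖ ^ 2) := by
  simp [bobkovIntegrand, sum_sq_apply_single_eq_norm_sq]

lemma bobkovIntegrand_le {η : ℝ} (hη : 0 ≤ η) (f : EuclideanSpace ℝ ι → ℝ)
    (x : EuclideanSpace ℝ ι) :
    bobkovIntegrand f η x ≤ bobkovIntegrand f 0 x + √(Fintype.card ι) * η := by
  simpa [bobkovIntegrand, sqrt_sq hη] using sqrt_add_sq_add_sum_add_sq_le (I (f x)) 0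
    (fun i ↦ |fderiv ℝ f x (EuclideanSpace.single i 1)|) (fun _ : ι ↦ η)

lemma continuous_bobkovIntegrand (hf : Continuous f) (hf' : Continuous (fderiv ℝ f)) (η : ℝ) :
    Continuous (bobkovIntegrand f η) := by
  have hI := continuous_gaussianProfile.comp hf
  unfold bobkovIntegrand
  fun_prop

lemma norm_bobkovIntegrand_le {L : ℝ≥0} (hf : LipschitzWith L f) {η : ℝ} (hη : 0 ≤ η)
    (x : EuclideanSpace ℝ ι) :
    ‖bobkovIntegrand f η x‖ ≤ 1 + L + √(Fintype.card ι) * η := by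
  have hzero : bobkovIntegrand f 0 x ≤ 1 + L := by
    rw [bobkovIntegrand_zero, sqrt_le_iff]
    have hI := gaussianProfile_nonneg (f x)
    have hI' := gaussianProfile_le_one (f x)
    have hL : ‖fderiv ℝ f x‖ ≤ L := norm_fderiv_le_of_lipschitz ℝ hf
    exact ⟨by positivity, by nlinarith [norm_nonneg (fderiv ℝ f x)]⟩
  rw [norm_of_nonneg (show 0 ≤ bobkovIntegrand f η x from sqrt_nonneg _)]
  linarith [bobkovIntegrand_le hη f x]

lemma gaussianProfile_integral_le_integral_bobkovIntegrand (hf : Differentiable ℝ f)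
    (hf' : UniformContinuous (fderiv ℝ f)) {L : ℝ≥0} (hL : LipschitzWith L f)
    (hf₀₁ : ∀ x, f x ∈ Icc 0 1) {η : ℝ} (hη : 0 < η) :
    I (∫ x, f x ∂γ) ≤ ∫ x, bobkovIntegrand f η x ∂γ := by
  obtain ⟨r, hr, hexpand⟩ := exists_forall_norm_sub_sub_fderiv_le hf hf' hη
  let f_bdd := BoundedContinuousFunction.ofNormedAddCommGroup f hf.continuous 1 fun x ↦ by
    rw [norm_of_nonneg (hf₀₁ x).1]
    exact (hf₀₁ x).2
  let B_bdd := BoundedContinuousFunction.ofNormedAddCommGroup (bobkovIntegrand f η)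
    (continuous_bobkovIntegrand hf.continuous hf'.continuous η) _ (norm_bobkovIntegrand_le hL hη.le)
  refine le_of_tendsto_of_tendsto ((continuous_gaussianProfile.tendsto _).comp
    (tendsto_integral_uniformLaw_normalizedSignSum f_bdd))
    (tendsto_integral_uniformLaw_normalizedSignSum B_bdd) ?_
  have hsmall : ∀ᶠ N : ℕ in atTop, 2 / √N < r :=
    ((tendsto_sqrt_atTop.comp tendsto_natCast_atTop_atTop).const_div_atTop 2).eventually_lt_const hr
  filter_upwards [hsmall, eventually_ne_atTop 0] with N hN hN₀
  simp only [Function.comp_apply, integral_uniformLaw_eq_expect]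
  refine (gaussianProfile_expect_le fun ω ↦ hf₀₁ _).trans (Finset.expect_le_expect fun ω _ ↦ ?_)
  exact sqrt_le_sqrt (by gcongr; exact sum_sq_half_sub_flipSign_le hexpand hN₀ hN ω)

end DecidableEq

theorem gaussianProfile_integral_le (hf : Differentiable ℝ f)
    (hf' : UniformContinuous (fderiv ℝ f)) {L : ℝ≥0} (hL : LipschitzWith L f)
    (hf₀₁ : ∀ x, f x ∈ Icc 0 1) :
    I (∫ x, f x ∂γ) ≤ ∫ x, √(I (f x) ^ 2 + ‖fderiv ℝ f x‖ ^ 2) ∂γ := by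
  classical
  have h_int {η : ℝ} (hη : 0 ≤ η) : Integrable (bobkovIntegrand f η) γ :=
    .of_bound (continuous_bobkovIntegrand hf.continuous hf'.continuous η).aestronglyMeasurable _
      (.of_forall (norm_bobkovIntegrand_le hL hη))
  simp only [← bobkovIntegrand_zero]
  refine le_of_forall_pos_le_add fun δ hδ ↦ ?_
  obtain ⟨η, hη, hηδ⟩ : ∃ η > 0, √(Fintype.card ι) * η ≤ δ :=
    ⟨δ / (√(Fintype.card ι) + 1), by positivity, by
      rw [mul_div_assoc', div_le_iff₀ (by positivity)]
      nlinarith⟩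
  calc I (∫ x, f x ∂γ) ≤ ∫ x, bobkovIntegrand f η x ∂γ :=
        gaussianProfile_integral_le_integral_bobkovIntegrand hf hf' hL hf₀₁ hη
    _ ≤ ∫ x, (bobkovIntegrand f 0 x + √(Fintype.card ι) * η) ∂γ :=
        integral_mono (h_int hη.le) ((h_int le_rfl).add (integrable_const _))
          (bobkovIntegrand_le hη.le f)
    _ = ∫ x, bobkovIntegrand f 0 x ∂γ + √(Fintype.card ι) * η := by
        rw [integral_add (h_int le_rfl) (integrable_const _)]
        simp
    _ ≤ _ := by gcongr

end GaussianBobkov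

/-! ### Smooth Lipschitz cutoff functions -/

section Convolution

open scoped Convolution

variable {E : Type*} [NormedAddCommGroup E] [NormedSpace ℝ E] [HasContDiffBump E]
  [MeasurableSpace E] [BorelSpace E] [FiniteDimensional ℝ E] {μ : Measure E} [μ.IsAddHaarMeasure]
  (ψ : ContDiffBump (0 : E)) {q : E → ℝ}

lemma integrable_normed_mul_sub (hq : Continuous q) (x : E) :
    Integrable (fun t ↦ ψ.normed μ t * q (x - t)) μ :=
  ψ.hasCompactSupport_normed.convolutionExists_left (ContinuousLinearMap.lsmul ℝ ℝ)
    ψ.continuous_normed hq.locallyIntegrable x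

lemma lipschitzWith_normed_convolution {L : ℝ≥0} (hq : LipschitzWith L q) :
    LipschitzWith L (ψ.normed μ ⋆[ContinuousLinearMap.lsmul ℝ ℝ, μ] q) := by
  refine .of_dist_le_mul fun x y ↦ ?_
  have h_int := integrable_normed_mul_sub (μ := μ) ψ hq.continuous
  have hpt (t : E) : ‖ψ.normed μ t * q (x - t) - ψ.normed μ t * q (y - t)‖ ≤
      ψ.normed μ t * (L * dist x y) := by
    rw [← mul_sub, norm_mul, norm_of_nonneg (ψ.nonneg_normed t), ← dist_eq_norm]
    gcongr
    · exact ψ.nonneg_normed t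
    · simpa using hq.dist_le_mul (x - t) (y - t)
  simp only [convolution_def, ContinuousLinearMap.lsmul_apply, smul_eq_mul]
  rw [dist_eq_norm, ← integral_sub (h_int x) (h_int y)]
  refine (norm_integral_le_of_norm_le (ψ.integrable_normed.mul_const _)
    (.of_forall hpt)).trans_eq ?_
  rw [integral_mul_const, ψ.integral_normed, one_mul]

lemma normed_convolution_mem_Icc (hq : Continuous q) {a b : ℝ} (hqab : ∀ x, q x ∈ Icc a b) (x : E) :
    (ψ.normed μ ⋆[ContinuousLinearMap.lsmul ℝ ℝ, μ] q) x ∈ Icc a b := by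
  have h_int := integrable_normed_mul_sub (μ := μ) ψ hq x
  have hconst (c : ℝ) : ∫ t, ψ.normed μ t * c ∂μ = c := by
    rw [integral_mul_const, ψ.integral_normed, one_mul]
  simp only [convolution_def, ContinuousLinearMap.lsmul_apply, smul_eq_mul]
  constructor
  · calc a = ∫ t, ψ.normed μ t * a ∂μ := (hconst a).symm
      _ ≤ ∫ t, ψ.normed μ t * q (x - t) ∂μ :=
        integral_mono (ψ.integrable_normed.mul_const a) h_int fun t ↦
          mul_le_mul_of_nonneg_left (hqab _).1 (ψ.nonneg_normed t)
  · calc ∫ t, ψ.normed μ t * q (x - t) ∂μ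
      _ ≤ ∫ t, ψ.normed μ t * b ∂μ :=
        integral_mono h_int (ψ.integrable_normed.mul_const b) fun t ↦
          mul_le_mul_of_nonneg_left (hqab _).2 (ψ.nonneg_normed t)
      _ = b := hconst b

end Convolution

section Cutoff

variable {E : Type*} [NormedAddCommGroup E] [NormedSpace ℝ E] [FiniteDimensional ℝ E]

lemma exists_contDiff_lipschitzWith_of_lipschitzWith {q : E → ℝ} {L : ℝ≥0} (hq : LipschitzWith L q)
    {a b : ℝ} (hqab : ∀ x, q x ∈ Icc a b) {η : ℝ} (hη : 0 < η) :
    ∃ k : E → ℝ, ContDiff ℝ 1 k ∧ LipschitzWith L k ∧ (∀ x, k x ∈ Icc a b) ∧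
      ∀ x c, (∀ y ∈ ball x η, q y = c) → k x = c := by
  borelize E
  let ψ : ContDiffBump (0 : E) := ⟨η / 2, η, half_pos hη, half_lt_self hη⟩
  refine ⟨_, ψ.hasCompactSupport_normed.contDiff_convolution_left (μ := .addHaar)
    (.lsmul ℝ ℝ) ψ.contDiff_normed hq.continuous.locallyIntegrable,
    lipschitzWith_normed_convolution ψ hq, normed_convolution_mem_Icc ψ hq.continuous hqab,
    fun x c hc ↦ ?_⟩
  have hx : q x = c := hc x (mem_ball_self hη)
  rw [ψ.normed_convolution_eq_right fun y hy ↦ (hc y hy).trans hx.symm, hx]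

lemma exists_contDiff_lipschitzWith_cutoff (K : Set E) {δ : ℝ} {L : ℝ≥0} (hL₀ : 0 < L)
    (hL : (L : ℝ)⁻¹ < δ) :
    ∃ k : E → ℝ, ContDiff ℝ 1 k ∧ LipschitzWith L k ∧ (∀ x, k x ∈ Icc 0 1) ∧
      (∀ x ∈ K, k x = 1) ∧ ∀ x ∉ cthickening δ K, k x = 0 := by
  obtain ⟨η, hη, rfl⟩ : ∃ η > 0, η + ((L : ℝ)⁻¹ + η) = δ :=
    ⟨(δ - (L : ℝ)⁻¹) / 2, by linarith, by ring⟩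
  have hL' : 0 < (L : ℝ)⁻¹ := inv_pos.2 hL₀
  let q (x : E) : ℝ := thickenedIndicator hL' (cthickening η K) x
  have hq : LipschitzWith L q := by
    have h := lipschitzWith_thickenedIndicator hL' (cthickening η K)
    rw [toNNReal_inv, toNNReal_coe, inv_inv] at h
    exact .of_dist_le_mul h.dist_le_mul
  have hq₀₁ (x : E) : q x ∈ Icc 0 1 :=
    ⟨NNReal.coe_nonneg _, NNReal.coe_le_one.2 (thickenedIndicator_le_one _ _ x)⟩
  obtain ⟨k, hk, hkL, hk₀₁, hkq⟩ := exists_contDiff_lipschitzWith_of_lipschitzWith hq hq₀₁ hη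
  refine ⟨k, hk, hkL, hk₀₁, fun x hx ↦ hkq x 1 fun y hy ↦ ?_, fun x hx ↦ hkq x 0 fun y hy ↦ ?_⟩
  · have hyK : y ∈ cthickening η K := mem_cthickening_of_dist_le y x η K hx (mem_ball.1 hy).le
    exact congrArg NNReal.toReal (thickenedIndicator_one hL' _ hyK)
  · refine congrArg NNReal.toReal (thickenedIndicator_zero hL' _ fun hyK ↦ hx ?_)
    have hyK' : y ∈ cthickening ((L : ℝ)⁻¹ + η) K :=
      thickening_subset_cthickening _ _ (thickening_cthickening_subset _ hη.le _ hyK)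
    exact cthickening_cthickening_subset hη.le (by positivity) K
      (mem_cthickening_of_dist_le x y η _ hyK' (mem_ball'.1 hy).le)

end Cutoff

/-! ### The Gaussian isoperimetric inequality -/

section Isoperimetry

variable {ι : Type*} [Fintype ι]

lemma sqrt_gaussianProfile_sq_add_le_indicator {E : Type*} [NormedAddCommGroup E] [NormedSpace ℝ E]
    {K U : Set E} {k : E → ℝ} {L : ℝ≥0} (hk : LipschitzWith L k) (hk₀₁ : ∀ x, k x ∈ Icc 0 1)
    (hK : ∀ x ∈ K, k x = 1) (hU : ∀ x ∉ U, k x = 0) (x : E) :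
    √(I (k x) ^ 2 + ‖fderiv ℝ k x‖ ^ 2) ≤ (U \ K).indicator (fun _ ↦ 1 + (L : ℝ)) x := by
  by_cases hxK : x ∈ K
  · have hmax : IsLocalMax k x := .of_forall fun y ↦ hK x hxK ▸ (hk₀₁ y).2
    simp [hxK, hK x hxK, hmax.fderiv_eq_zero, gaussianProfile_of_notMem]
  by_cases hxU : x ∈ U
  · rw [indicator_of_mem (show x ∈ U \ K from ⟨hxU, hxK⟩), sqrt_le_iff]
    have hI := gaussianProfile_nonneg (k x)
    have hI' := gaussianProfile_le_one (k x)
    have hL : ‖fderiv ℝ k x‖ ≤ L := norm_fderiv_le_of_lipschitz ℝ hk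
    exact ⟨by positivity, by nlinarith [norm_nonneg (fderiv ℝ k x)]⟩
  · have hmin : IsLocalMin k x := .of_forall fun y ↦ hU x hxU ▸ (hk₀₁ y).1
    simp [hxU, hU x hxU, hmin.fderiv_eq_zero, gaussianProfile_of_notMem]

lemma exists_gaussianProfile_le_mul_measureReal_sub {K : Set (EuclideanSpace ℝ ι)}
    (hK : IsCompact K) {δ : ℝ} {L : ℝ≥0} (hL₀ : 0 < L) (hL : (L : ℝ)⁻¹ < δ) :
    ∃ c ∈ Icc ((γ).real K) ((γ).real (cthickening δ K)),
      I c ≤ (1 + L) * ((γ).real (cthickening δ K) - (γ).real K) := by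
  classical
  obtain ⟨k, hk, hkL, hk₀₁, hkK, hkU⟩ := exists_contDiff_lipschitzWith_cutoff K hL₀ hL
  set U := cthickening δ K
  have hUmeas : MeasurableSet U := isClosed_cthickening.measurableSet
  have h_int : Integrable k γ := .of_bound hk.continuous.aestronglyMeasurable 1
    (.of_forall fun x ↦ by rw [norm_of_nonneg (hk₀₁ x).1]; exact (hk₀₁ x).2)
  have hf' : UniformContinuous (fderiv ℝ k) :=
    (hk.continuous_fderiv one_ne_zero).uniformContinuous_of_tendsto_cocompact
      ((HasCompactSupport.intro hK.cthickening hkU).fderiv (𝕜 := ℝ)).is_zero_at_infty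
  refine ⟨∫ x, k x ∂γ, ⟨?_, ?_⟩, ?_⟩
  · rw [← integral_indicator_one hK.measurableSet]
    refine integral_mono ((integrable_const 1).indicator hK.measurableSet) h_int fun x ↦ ?_
    exact indicator_le' (fun y hy ↦ (hkK y hy).ge) (fun y _ ↦ (hk₀₁ y).1) x
  · rw [← integral_indicator_one hUmeas]
    refine integral_mono h_int ((integrable_const 1).indicator hUmeas) fun x ↦ ?_
    exact le_indicator (fun y _ ↦ (hk₀₁ y).2) (fun y hy ↦ (hkU y hy).le) x
  · calc I (∫ x, k x ∂γ)
        ≤ ∫ x, √(I (k x) ^ 2 + ‖fderiv ℝ k x‖ ^ 2) ∂γ :=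
          gaussianProfile_integral_le (hk.differentiable one_ne_zero) hf' hkL hk₀₁
      _ ≤ ∫ x, (U \ K).indicator (fun _ ↦ 1 + (L : ℝ)) x ∂γ :=
          integral_mono_of_nonneg (.of_forall fun _ ↦ sqrt_nonneg _)
            ((integrable_const _).indicator (hUmeas.diff hK.measurableSet))
            (.of_forall (sqrt_gaussianProfile_sq_add_le_indicator hkL hk₀₁ hkK hkU))
      _ = (1 + L) * ((γ).real U - (γ).real K) := by
          rw [integral_indicator_const _ (hUmeas.diff hK.measurableSet), smul_eq_mul, mul_comm,
            measureReal_sdiff (self_subset_cthickening K) hK.measurableSet]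

lemma stdNormalPDF_le_mul_exp {x y M d : ℝ} (hx : |x| ≤ M) (hy : |y| ≤ M) (hd : |x - y| ≤ d) :
    φ x ≤ φ y * exp (M * d) := by
  rw [stdNormalPDF_eq, stdNormalPDF_eq, mul_assoc, ← exp_add]
  gcongr
  have hM : |(x + y) / 2| ≤ M := by
    rw [abs_div, abs_two]
    linarith [abs_add_le x y]
  have : |(y ^ 2 - x ^ 2) / 2| ≤ M * d := by
    rw [show (y ^ 2 - x ^ 2) / 2 = -((x + y) / 2 * (x - y)) by ring, abs_neg, abs_mul]
    gcongr
    exact (abs_nonneg _).trans hM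
  linarith [le_abs_self ((y ^ 2 - x ^ 2) / 2)]

lemma stdNormalCDF_sub_le {u v w M : ℝ} (hu : |u| ≤ M) (hv : |v| ≤ M) (hw : w ∈ Icc u v) :
    Φ v - Φ u ≤ φ w * exp (M * (v - u)) * (v - u) := by
  have habs {x : ℝ} (hx : x ∈ Icc u v) : |x| ≤ M :=
    abs_le.2 ⟨(abs_le.1 hu).1.trans hx.1, hx.2.trans (abs_le.1 hv).2⟩
  have huv : u ≤ v := hw.1.trans hw.2
  refine (convex_Icc u v).image_sub_le_mul_sub_of_deriv_le continuous_stdNormalCDF.continuousOn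
    (fun x _ ↦ (hasDerivAt_stdNormalCDF x).differentiableAt.differentiableWithinAt) (fun x hx ↦ ?_)
    u (left_mem_Icc.2 huv) v (right_mem_Icc.2 huv) huv
  have hx' : x ∈ Icc u v := interior_subset hx
  rw [(hasDerivAt_stdNormalCDF x).deriv]
  exact stdNormalPDF_le_mul_exp (habs hx') (habs hw) (abs_sub_le_of_le_of_le hx'.1 hx'.2 hw.1 hw.2)

lemma mul_exp_div_le_of_one_le_mul {M δ d : ℝ} (hM : 0 ≤ M) (hδ : 0 < δ) (hd : 0 ≤ d)
    (h : 1 ≤ (2 + δ⁻¹) * (exp (M * d) * d)) : δ * (exp (-(M * δ)) / (1 + 2 * δ)) ≤ d := by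
  rw [mul_div_assoc', div_le_iff₀ (by positivity), exp_neg, ← div_eq_mul_inv,
    div_le_iff₀ (exp_pos _)]
  obtain hle | hle := le_total δ d
  · have hone : 1 ≤ (1 + 2 * δ) * exp (M * δ) :=
      one_le_mul_of_one_le_of_one_le (by linarith) (one_le_exp (by positivity))
    calc δ ≤ d := hle
      _ ≤ d * ((1 + 2 * δ) * exp (M * δ)) := le_mul_of_one_le_right hd hone
      _ = d * (1 + 2 * δ) * exp (M * δ) := by ring
  · calc δ ≤ δ * ((2 + δ⁻¹) * (exp (M * d) * d)) := le_mul_of_one_le_right hδ.le h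
      _ = d * (1 + 2 * δ) * exp (M * d) := by
          field_simp
          ring
      _ ≤ d * (1 + 2 * δ) * exp (M * δ) := by gcongr

lemma add_mul_exp_div_le_of_measureReal_eq {K : Set (EuclideanSpace ℝ ι)} (hK : IsCompact K)
    {δ u v M : ℝ} (hδ : 0 < δ) (hu : (γ).real K = Φ u) (hv : (γ).real (cthickening δ K) = Φ v)
    (huM : |u| ≤ M) (hvM : |v| ≤ M) : u + δ * (exp (-(M * δ)) / (1 + 2 * δ)) ≤ v := by
  have hL : ((1 + δ⁻¹).toNNReal : ℝ) = 1 + δ⁻¹ := coe_toNNReal _ (by positivity)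
  obtain ⟨c, hc, hIc⟩ := exists_gaussianProfile_le_mul_measureReal_sub hK (L := (1 + δ⁻¹).toNNReal)
    (toNNReal_pos.2 (by positivity)) (by rw [hL]; exact inv_lt_of_inv_lt₀ hδ (lt_one_add _))
  rw [hu, hv] at hc hIc
  obtain ⟨w, rfl⟩ : ∃ w, Φ w = c :=
    ⟨Q c, stdNormalCDF_stdNormalQuantile ⟨(stdNormalCDF_mem_Ioo u).1.trans_le hc.1,
      hc.2.trans_lt (stdNormalCDF_mem_Ioo v).2⟩⟩
  have hw : w ∈ Icc u v :=
    ⟨strictMono_stdNormalCDF.le_iff_le.1 hc.1, strictMono_stdNormalCDF.le_iff_le.1 hc.2⟩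
  have hgap : 1 ≤ (2 + δ⁻¹) * (exp (M * (v - u)) * (v - u)) := by
    refine le_of_mul_le_mul_left ?_ (stdNormalPDF_pos w)
    calc φ w * 1 = I (Φ w) := by rw [mul_one, gaussianProfile_stdNormalCDF]
      _ ≤ (1 + (1 + δ⁻¹)) * (Φ v - Φ u) := by rwa [hL] at hIc
      _ ≤ (1 + (1 + δ⁻¹)) * (φ w * exp (M * (v - u)) * (v - u)) := by
          gcongr
          exact stdNormalCDF_sub_le huM hvM hw
      _ = φ w * ((2 + δ⁻¹) * (exp (M * (v - u)) * (v - u))) := by ring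
  linarith [mul_exp_div_le_of_one_le_mul ((abs_nonneg u).trans huM) hδ
    (sub_nonneg.2 (hw.1.trans hw.2)) hgap]

lemma add_mul_le_of_forall_add_mul_le {f c : ℝ → ℝ} {ℓ t : ℝ} (ht : 0 < t)
    (hc : Tendsto c (𝓝[>] 0) (𝓝 ℓ))
    (hf : ∀ s δ, 0 ≤ s → 0 < δ → s + δ ≤ t → f s + δ * c δ ≤ f (s + δ)) : f 0 + t * ℓ ≤ f t := by
  have hsteps {N : ℕ} (hN : 0 < N) : f 0 + t * c (t / N) ≤ f t := by
    have hN' : (0 : ℝ) < N := Nat.cast_pos.2 hN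
    have hpartial (j : ℕ) (hj : j ≤ N) : f 0 + j * (t / N * c (t / N)) ≤ f (j * (t / N)) := by
      induction j with
      | zero => simp
      | succ j ih =>
        have hstep := hf (j * (t / N)) (t / N) (by positivity) (by positivity) (by
          have : (j : ℝ) + 1 ≤ N := by exact_mod_cast hj
          rw [← add_one_mul, mul_div_assoc', div_le_iff₀ hN']
          nlinarith)
        have := ih (by lia)
        push_cast
        rw [add_one_mul, add_one_mul]
        linarith
    simpa [← mul_assoc, mul_div_cancel₀ t hN'.ne'] using hpartial N le_rfl
  have hlim : Tendsto (fun N : ℕ ↦ t / N) atTop (𝓝[>] 0) :=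
    tendsto_nhdsWithin_iff.2 ⟨tendsto_const_div_atTop_nhds_zero_nat t, by
      filter_upwards [eventually_gt_atTop 0] with N hN
      exact div_pos ht (Nat.cast_pos.2 hN)⟩
  refine le_of_tendsto (((hc.comp hlim).const_mul t).const_add (f 0)) ?_
  filter_upwards [eventually_gt_atTop 0] with N hN using hsteps hN

theorem stdNormalCDF_add_le_measureReal_cthickening {K : Set (EuclideanSpace ℝ ι)}
    (hK : IsCompact K) {a t : ℝ} (ht : 0 < t) (ha : Φ a ≤ (γ).real K) :
    Φ (a + t) ≤ (γ).real (cthickening t K) := by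
  by_contra! hlt
  have hmono {s r : ℝ} (hsr : s ≤ r) : (γ).real (cthickening s K) ≤ (γ).real (cthickening r K) :=
    measureReal_mono (cthickening_mono hsr K)
  have hgt (s : ℝ) : Φ a ≤ (γ).real (cthickening s K) :=
    ha.trans (measureReal_mono (self_subset_cthickening K))
  have hΦQ {s : ℝ} (hs : s ≤ t) :
      (γ).real (cthickening s K) = Φ (Q ((γ).real (cthickening s K))) :=
    (stdNormalCDF_stdNormalQuantile ⟨(stdNormalCDF_mem_Ioo a).1.trans_le (hgt s),
      ((hmono hs).trans_lt hlt).trans (stdNormalCDF_mem_Ioo _).2⟩).symm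
  have haQ {s : ℝ} (hs : s ≤ t) : a ≤ Q ((γ).real (cthickening s K)) :=
    strictMono_stdNormalCDF.le_iff_le.1 (hΦQ hs ▸ hgt s)
  have hQt {s : ℝ} (hs : s ≤ t) : Q ((γ).real (cthickening s K)) < a + t :=
    strictMono_stdNormalCDF.lt_iff_lt.1 (hΦQ hs ▸ (hmono hs).trans_lt hlt)
  have hQM {s : ℝ} (hs : s ≤ t) : |Q ((γ).real (cthickening s K))| ≤ |a| + t :=
    abs_le.2 ⟨by linarith [haQ hs, neg_abs_le a], by linarith [hQt hs, le_abs_self a]⟩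
  have hc : Tendsto (fun δ ↦ exp (-((|a| + t) * δ)) / (1 + 2 * δ)) (𝓝[>] 0) (𝓝 1) := by
    have : ContinuousAt (fun δ ↦ exp (-((|a| + t) * δ)) / (1 + 2 * δ)) 0 :=
      .div (by fun_prop) (by fun_prop) (by simp)
    simpa [ContinuousAt] using this.tendsto.mono_left nhdsWithin_le_nhds
  have hgrowth : Q ((γ).real (cthickening 0 K)) + t * 1 ≤ Q ((γ).real (cthickening t K)) := by
    refine add_mul_le_of_forall_add_mul_le ht hc (f := fun s ↦ Q ((γ).real (cthickening s K)))
      fun s δ hs hδ hsδ ↦ ?_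
    have hthick : cthickening δ (cthickening s K) = cthickening (s + δ) K := by
      rw [cthickening_cthickening hδ.le hs, add_comm]
    exact add_mul_exp_div_le_of_measureReal_eq hK.cthickening hδ (hΦQ (by linarith))
      (by rw [hthick]; exact hΦQ hsδ) (hQM (by linarith)) (hQM hsδ)
  linarith [haQ ht.le, hQt le_rfl]

theorem stdNormalCDF_add_le_measureReal_thickening {A : Set (EuclideanSpace ℝ ι)}
    {a t : ℝ} (ht : 0 < t) (ha : Φ a ≤ (γ).real A) :
    Φ (a + t) ≤ (γ).real (thickening t A) := by
  rw [← thickening_closure]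
  have hlim : Tendsto (fun η ↦ Φ (a - η + (t - η))) (𝓝[>] 0) (𝓝 (Φ (a + t))) := by
    have : Continuous fun η ↦ Φ (a - η + (t - η)) := continuous_stdNormalCDF.comp (by fun_prop)
    simpa using (this.tendsto 0).mono_left nhdsWithin_le_nhds
  refine le_of_tendsto hlim ?_
  filter_upwards [Ioo_mem_nhdsGT ht] with η hη
  have hlt : ENNReal.ofReal (Φ (a - η)) < γ (closure A) := by
    rw [ENNReal.ofReal_lt_iff_lt_toReal (stdNormalCDF_mem_Ioo _).1.le (measure_ne_top _ _)]
    exact (strictMono_stdNormalCDF (sub_lt_self a hη.1)).trans_le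
      (ha.trans (measureReal_mono subset_closure))
  obtain ⟨K, hKA, hK, hKlt⟩ := isClosed_closure.measurableSet.exists_lt_isCompact hlt
  rw [ENNReal.ofReal_lt_iff_lt_toReal (stdNormalCDF_mem_Ioo _).1.le (measure_ne_top _ _)] at hKlt
  calc Φ (a - η + (t - η)) ≤ (γ).real (cthickening (t - η) K) :=
        stdNormalCDF_add_le_measureReal_cthickening hK (sub_pos.2 hη.2) hKlt.le
    _ ≤ (γ).real (thickening t (closure A)) := measureReal_mono <|
        (cthickening_subset_thickening' ht (sub_lt_self t hη.1) K).trans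
          (thickening_subset_of_subset t hKA)

end Isoperimetry

/-! ### Transport to the unit cube -/

section Cube

variable {ι : Type*}

lemma map_stdNormalCDF_gaussianReal :
    (gaussianReal 0 1).map Φ = volume.restrict (Icc 0 1) := by
  have hrange : Φ '' univ = Ioo 0 1 := by
    rw [image_univ]
    exact Subset.antisymm (range_subset_iff.2 stdNormalCDF_mem_Ioo)
      fun p hp ↦ ⟨Q p, stdNormalCDF_stdNormalQuantile hp⟩
  have hmap := map_withDensity_abs_det_fderiv_eq_addHaar volume MeasurableSet.univ.nullMeasurableSet
    (fun x _ ↦ (hasDerivAt_stdNormalCDF x).hasFDerivAt.hasFDerivWithinAt)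
    strictMono_stdNormalCDF.injective.injOn
  rw [hrange, Measure.restrict_univ, Measure.restrict_congr_set Ioo_ae_eq_Icc] at hmap
  rw [← hmap, gaussianReal_of_var_ne_zero 0 one_ne_zero]
  congr with x
  simp [gaussianPDF, abs_of_pos (stdNormalPDF_pos x)]

lemma abs_stdNormalCDF_sub_le (a b : ℝ) : |Φ a - Φ b| ≤ (√(2 * π))⁻¹ * |a - b| :=
  convex_univ.norm_image_sub_le_of_norm_hasDerivWithin_le
    (fun x _ ↦ (hasDerivAt_stdNormalCDF x).hasDerivWithinAt)
    (fun x _ ↦ (abs_of_pos (stdNormalPDF_pos x)).trans_le (stdNormalPDF_le x))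
    (mem_univ b) (mem_univ a)

/-- The coordinatewise map `(xᵢ) ↦ (Φ xᵢ)`, which transports the standard Gaussian measure to the
uniform measure on the unit cube. Its values are plain functions since the volume of the cube is
that of the product space `ι → ℝ`. -/
noncomputable def gaussianToCube (x : EuclideanSpace ℝ ι) (i : ι) : ℝ := Φ (x i)

lemma gaussianToCube_mem_Icc (x : EuclideanSpace ℝ ι) : gaussianToCube x ∈ Icc (0 : ι → ℝ) 1 :=
  ⟨fun i ↦ (stdNormalCDF_mem_Ioo (x i)).1.le, fun i ↦ (stdNormalCDF_mem_Ioo (x i)).2.le⟩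

lemma measurableEmbedding_gaussianToCube [Finite ι] :
    MeasurableEmbedding (gaussianToCube : EuclideanSpace ℝ ι → ι → ℝ) := by
  cases nonempty_fintype ι
  have hcont : Continuous (gaussianToCube : EuclideanSpace ℝ ι → ι → ℝ) :=
    continuous_pi fun i ↦ continuous_stdNormalCDF.comp (by fun_prop)
  refine hcont.measurableEmbedding fun x y hxy ↦ PiLp.ext fun i ↦ ?_
  exact strictMono_stdNormalCDF.injective (congrFun hxy i)

variable [Fintype ι]

lemma map_gaussianToCube_stdGaussian :
    (stdGaussian (EuclideanSpace ℝ ι)).map gaussianToCube =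
      volume.restrict (Icc (0 : ι → ℝ) 1) := by
  have : SigmaFinite ((gaussianReal 0 1).map Φ) := by
    rw [map_stdNormalCDF_gaussianReal]
    infer_instance
  calc (stdGaussian (EuclideanSpace ℝ ι)).map gaussianToCube
      = (Measure.pi fun _ ↦ gaussianReal 0 1).map fun x i ↦ Φ (x i) := by
        rw [← map_pi_eq_stdGaussian,
          Measure.map_map measurableEmbedding_gaussianToCube.measurable (by fun_prop)]
        rfl
    _ = Measure.pi fun _ : ι ↦ volume.restrict (Icc 0 1) := by
        rw [Measure.pi_map_pi fun _ ↦ continuous_stdNormalCDF.aemeasurable,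
          map_stdNormalCDF_gaussianReal]
    _ = volume.restrict (Icc (0 : ι → ℝ) 1) := by
        rw [← Measure.restrict_pi_pi, ← volume_pi, ← pi_univ_Icc]
        rfl

lemma stdGaussian_preimage_gaussianToCube (A : Set (ι → ℝ)) :
    γ (gaussianToCube ⁻¹' A) = volume (A ∩ Icc 0 1) := by
  rw [← measurableEmbedding_gaussianToCube.map_apply, map_gaussianToCube_stdGaussian,
    Measure.restrict_apply' measurableSet_Icc]

lemma dist_toLp_gaussianToCube_le (x y : EuclideanSpace ℝ ι) :
    dist (WithLp.toLp 2 (gaussianToCube x)) (WithLp.toLp 2 (gaussianToCube y)) ≤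
      (√(2 * π))⁻¹ * dist x y := by
  rw [EuclideanSpace.dist_eq, EuclideanSpace.dist_eq]
  refine sqrt_le_iff.2 ⟨by positivity, ?_⟩
  rw [mul_pow, sq_sqrt (by positivity), Finset.mul_sum]
  refine Finset.sum_le_sum fun i _ ↦ ?_
  rw [← mul_pow]
  gcongr
  exact abs_stdNormalCDF_sub_le (x i) (y i)

theorem exists_dist_toLp_le_of_volume_ge {S R : Set (ι → ℝ)} (hScube : S ⊆ Icc 0 1) {t : ℝ}
    (ht : 0 ≤ t) (hS : ENNReal.ofReal (1 / 2 * exp (-t ^ 2 / 2)) ≤ volume S)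
    (hR : volume R < ENNReal.ofReal (1 / 2)) :
    ∃ x ∈ S, ∃ y ∈ Icc 0 1 \ R, dist (WithLp.toLp 2 x) (WithLp.toLp 2 y) ≤ (√(2 * π))⁻¹ * t := by
  obtain rfl | ht := ht.eq_or_lt
  · have hRS : volume R < volume S := hR.trans_le (by simpa using hS)
    obtain ⟨x, hxS, hxR⟩ := not_subset.1 fun hSR ↦ (measure_mono hSR).not_gt hRS
    exact ⟨x, hxS, x, ⟨hScube hxS, hxR⟩, by simp⟩
  have hΦS : Φ (-t) ≤ (γ).real (gaussianToCube ⁻¹' S) := by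
    rw [measureReal_def, ← ENNReal.ofReal_le_iff_le_toReal (measure_ne_top _ _),
      stdGaussian_preimage_gaussianToCube, inter_eq_left.2 hScube]
    exact (ENNReal.ofReal_le_ofReal (stdNormalCDF_neg_le ht.le)).trans hS
  have hthick : 1 / 2 ≤ (γ).real (thickening t (gaussianToCube ⁻¹' S)) := by
    simpa [stdNormalCDF_zero] using stdNormalCDF_add_le_measureReal_thickening ht hΦS
  have hγR : (γ).real (gaussianToCube ⁻¹' R) < 1 / 2 := by
    refine (ENNReal.lt_ofReal_iff_toReal_lt (measure_ne_top _ _)).1 (lt_of_le_of_lt ?_ hR)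
    rw [stdGaussian_preimage_gaussianToCube]
    exact measure_mono inter_subset_left
  obtain ⟨y, hyS, hyR⟩ := not_subset.1 fun hsub ↦
    (hthick.trans (measureReal_mono hsub)).not_gt hγR
  obtain ⟨x, hxS, hyx⟩ := mem_thickening_iff.1 hyS
  refine ⟨_, hxS, _, ⟨gaussianToCube_mem_Icc y, hyR⟩, (dist_toLp_gaussianToCube_le x y).trans ?_⟩
  rw [dist_comm]
  gcongr

end Cube

/-! ### Comparison of `ℓ_p` distances -/

variable {n : ℕ}

lemma lpDist_nonneg (p : ℝ) (x y : Fin n → ℝ) : 0 ≤ lpDist p x y := by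
  unfold lpDist
  positivity

lemma lpDist_rpow {p : ℝ} (hp : 0 < p) (x y : Fin n → ℝ) :
    lpDist p x y ^ p = ∑ i, |x i - y i| ^ p := by
  rw [lpDist, one_div, rpow_inv_rpow (by positivity) hp.ne']

lemma lpDist_two (x y : Fin n → ℝ) :
    lpDist 2 x y = dist (WithLp.toLp 2 x) (WithLp.toLp 2 y) := by
  simp [lpDist, EuclideanSpace.dist_eq, sqrt_eq_rpow, dist_eq]

lemma abs_sub_le_lpDist {p : ℝ} (hp : 0 < p) (x y : Fin n → ℝ) (i : Fin n) :
    |x i - y i| ≤ lpDist p x y := by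
  rw [← rpow_le_rpow_iff (abs_nonneg _) (lpDist_nonneg p x y) hp, lpDist_rpow hp]
  exact Finset.single_le_sum (f := fun i ↦ |x i - y i| ^ p) (fun _ _ ↦ by positivity)
    (Finset.mem_univ i)

lemma lpDist_le_lpDist_of_le {p q : ℝ} (hq : 0 < q) (hqp : q ≤ p) (x y : Fin n → ℝ) :
    lpDist p x y ≤ lpDist q x y := by
  have hp : 0 < p := hq.trans_le hqp
  have hsplit {a : ℝ} (ha : 0 ≤ a) : a ^ p = a ^ q * a ^ (p - q) := by
    rw [← rpow_add_of_nonneg ha hq.le (sub_nonneg.2 hqp), add_sub_cancel]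
  rw [← rpow_le_rpow_iff (lpDist_nonneg p x y) (lpDist_nonneg q x y) hp]
  calc lpDist p x y ^ p = ∑ i, |x i - y i| ^ q * |x i - y i| ^ (p - q) := by
        simp only [lpDist_rpow hp, hsplit (abs_nonneg _)]
    _ ≤ ∑ i, |x i - y i| ^ q * lpDist q x y ^ (p - q) := by
        gcongr with i
        exact abs_sub_le_lpDist hq x y i
    _ = lpDist q x y ^ p := by
        rw [← Finset.sum_mul, ← lpDist_rpow hq, hsplit (lpDist_nonneg q x y)]

lemma lpDist_le_rpow_mul_lpDist {p q : ℝ} (hq : 0 < q) (hqp : q ≤ p) (x y : Fin n → ℝ) :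
    lpDist q x y ≤ (n : ℝ) ^ (1 / q - 1 / p) * lpDist p x y := by
  have hp : 0 < p := hq.trans_le hqp
  have hnonneg := lpDist_nonneg q x y
  rw [← rpow_le_rpow_iff hnonneg (mul_nonneg (by positivity) (lpDist_nonneg p x y)) hp]
  calc lpDist q x y ^ p = (∑ i, |x i - y i| ^ q) ^ (p / q) := by
        rw [← lpDist_rpow hq, ← rpow_mul hnonneg, mul_div_cancel₀ p hq.ne']
    _ ≤ (n : ℝ) ^ (p / q - 1) * ∑ i, (|x i - y i| ^ q) ^ (p / q) := by
        simpa using rpow_sum_le_const_mul_sum_rpow_of_nonneg Finset.univ ((one_le_div hq).2 hqp)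
          fun i _ ↦ rpow_nonneg (abs_nonneg (x i - y i)) q
    _ = (n : ℝ) ^ (p / q - 1) * lpDist p x y ^ p := by
        simp only [lpDist_rpow hp, ← rpow_mul (abs_nonneg _), mul_div_cancel₀ p hq.ne']
    _ = ((n : ℝ) ^ (1 / q - 1 / p) * lpDist p x y) ^ p := by
        rw [mul_rpow (by positivity) (lpDist_nonneg p x y), ← rpow_mul (by positivity)]
        congr 2
        field_simp

lemma lpDist_le_rpow_mul_lpDist_two {p : ℝ} (hp : 0 < p) (x y : Fin n → ℝ) :
    lpDist p x y ≤ (n : ℝ) ^ (1 / min p 2 - 1 / 2) * lpDist 2 x y := by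
  obtain h | h := le_total p 2
  · rw [min_eq_left h]
    exact lpDist_le_rpow_mul_lpDist hp h x y
  · simpa [min_eq_right h] using lpDist_le_lpDist_of_le two_pos h x y

theorem existence_of_adversarial_examples_general {S R : Set (Fin n → ℝ)} (hScube : S ⊆ Icc 0 1)
    (hR : volume R < ENNReal.ofReal (1 / 2)) {p ε : ℝ} (hp : 0 < p) (hε : 0 ≤ ε)
    (hS : ENNReal.ofReal (1 / 2 * exp (-π * ε ^ 2 * (n : ℝ) ^ (1 - 2 / min p 2))) ≤ volume S) :
    ∃ x ∈ S, ∃ x' ∈ Icc 0 1 \ R, lpDist p x x' ≤ ε := by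
  set r := 1 / min p 2 - 1 / 2 with hr
  have hexp : -(√(2 * π) * (ε * (n : ℝ) ^ (-r))) ^ 2 / 2 =
      -π * ε ^ 2 * (n : ℝ) ^ (1 - 2 / min p 2) := by
    have hpow : ((n : ℝ) ^ (-r)) ^ 2 = (n : ℝ) ^ (1 - 2 / min p 2) := by
      rw [← rpow_mul_natCast n.cast_nonneg]
      congr 1
      rw [hr]
      push_cast
      ring
    rw [mul_pow, mul_pow, hpow, sq_sqrt (by positivity)]
    ring
  obtain ⟨x, hx, x', hx', hdist⟩ :=
    exists_dist_toLp_le_of_volume_ge hScube (by positivity) (hexp ▸ hS) hR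
  refine ⟨x, hx, x', hx', ?_⟩
  calc lpDist p x x' ≤ (n : ℝ) ^ r * lpDist 2 x x' := lpDist_le_rpow_mul_lpDist_two hp x x'
    _ ≤ (n : ℝ) ^ r * (ε * (n : ℝ) ^ (-r)) := by
        rw [inv_mul_cancel_left₀ (by positivity), ← lpDist_two] at hdist
        gcongr
    _ = (n : ℝ) ^ r / (n : ℝ) ^ r * ε := by
        rw [rpow_neg n.cast_nonneg]
        ring
    _ ≤ ε := mul_le_of_le_one_left hε (div_self_le_one _)

end

theorem existence_of_adversarial_examples (n : ℕ) (ρ : (Fin n → ℝ) → ℝ)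
    (hρmeas : Measurable ρ) (hρ0 : ∀ x, 0 ≤ ρ x)
    (hρsupp : Function.support ρ ⊆ Set.Icc (0 : Fin n → ℝ) 1)
    (hρint : ∫ x in Set.Icc (0 : Fin n → ℝ) 1, ρ x = 1)
    (R : Set (Fin n → ℝ)) (hR : MeasurableSet R) (hRsub : R ⊆ Set.Icc 0 1)
    (hRvol : volume R < ENNReal.ofReal (1 / 2))
    (p : ℝ) (hp : 0 < p) (ε : ℝ) (hε : 0 ≤ ε)
    (hS : volume (Function.support ρ) ≥
      ENNReal.ofReal ((1 / 2) * Real.exp (-Real.pi * ε ^ 2 * (n : ℝ) ^ (1 - 2 / min p 2)))) :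
    ∃ x, 0 < ρ x ∧ ∃ x' ∈ Set.Icc (0 : Fin n → ℝ) 1 \ R, lpDist p x x' ≤ ε := by
  obtain ⟨x, hx, hx'⟩ := existence_of_adversarial_examples_general hρsupp hRvol hp hε hS
  exact ⟨x, (hρ0 x).lt_of_ne' hx, hx'⟩
end

section
/- (ε-expansion of a half sphere) For the unit sphere S^{n-1} ⊂ ℝⁿ with normalized surface measure μ₁ and geodesic metric, the geodesic ε-expansion of any half sphere has normalized measure at least 1 - √(π/8)·exp(-(n-1)ε²/2). -/
open Real MeasureTheory RealInnerProductSpace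

/-!
Writing a point of the unit sphere as `w + t • u` with `w ⟂ u`, the map
`w + t • u ↦ c • w + √(s ^ 2 + (c * t) ^ 2) • u`, where `s = sin ε` and `c = cos ε`, is
`c`-Lipschitz and carries the open half sphere `0 < t` onto the open cap `s < t`. Hence the cap has
`d`-dimensional Hausdorff measure at most `c ^ d` times that of the half sphere. For `u = -v` and
`ε < π / 2` this cap contains every point at geodesic distance more than `ε` from the half sphere
around `v`, and `cos ε ≤ exp (-ε ^ 2 / 2)` gives the bound with constant `1 / 2 ≤ √(π / 8)`. For
`ε ≥ π / 2` the expansion is the whole sphere, except in dimension `d = 0`.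
-/

section RealInequalities

theorem antitoneOn_exp_sq_div_two_mul_cos :
    AntitoneOn (fun x : ℝ => exp (x ^ 2 / 2) * cos x) (Set.Icc 0 (π / 2)) := by
  have hasDerivAt_self (x : ℝ) : HasDerivAt (fun x : ℝ => exp (x ^ 2 / 2) * cos x)
      (exp (x ^ 2 / 2) * (x * cos x - sin x)) x := by
    have hsq : HasDerivAt (fun x : ℝ => x ^ 2 / 2) x x :=
      ((hasDerivAt_pow 2 x).div_const 2).congr_deriv (by norm_num)
    exact (hsq.exp.mul (hasDerivAt_cos x)).congr_deriv (by ring)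
  refine antitoneOn_of_deriv_nonpos (convex_Icc _ _) (by fun_prop) (by fun_prop) fun x hx => ?_
  rw [interior_Icc] at hx
  have hcos : 0 < cos x := cos_pos_of_mem_Ioo ⟨by linarith [hx.1, pi_pos], hx.2⟩
  have htan : x * cos x < sin x := by
    rw [← lt_div_iff₀ hcos, ← tan_eq_sin_div_cos]
    exact lt_tan hx.1 hx.2
  rw [(hasDerivAt_self x).deriv]
  exact mul_nonpos_of_nonneg_of_nonpos (exp_pos _).le (by linarith)

theorem cos_le_exp_neg_sq_div_two {x : ℝ} (hx : |x| ≤ π / 2) : cos x ≤ exp (-(x ^ 2 / 2)) := by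
  have hanti := antitoneOn_exp_sq_div_two_mul_cos ⟨le_rfl, by positivity⟩ ⟨abs_nonneg x, hx⟩
    (abs_nonneg x)
  rw [exp_neg, ← one_div, le_div_iff₀' (exp_pos _)]
  simpa using hanti

theorem abs_sqrt_sq_add_sq_sub_le (s p q : ℝ) :
    |√(s ^ 2 + p ^ 2) - √(s ^ 2 + q ^ 2)| ≤ |p - q| := by
  have h := abs_norm_sub_norm_le (s + p * Complex.I) (s + q * Complex.I)
  rwa [Complex.norm_add_mul_I, Complex.norm_add_mul_I, add_sub_add_left_eq_sub, ← sub_mul,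
    norm_mul, Complex.norm_I, mul_one, ← Complex.ofReal_sub, Complex.norm_real] at h

theorem one_half_le_sqrt_pi_div_eight : 2⁻¹ ≤ √(π / 8) :=
  le_sqrt_of_sq_le (by linarith [pi_gt_three])

end RealInequalities

theorem ofReal_one_sub_le_measure_div {α : Type*} [MeasurableSpace α] {μ : Measure α}
    {s t : Set α} {δ : ℝ} (hδ : 0 ≤ δ) (hs₀ : μ s ≠ 0) (hs : μ s ≠ ⊤)
    (h : μ (s \ t) ≤ ENNReal.ofReal δ * μ s) :
    ENNReal.ofReal (1 - δ) ≤ μ t / μ s := by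
  rw [ENNReal.le_div_iff_mul_le (.inl hs₀) (.inl hs), ENNReal.ofReal_sub 1 hδ,
    ENNReal.ofReal_one, ENNReal.sub_mul fun _ _ => hs, one_mul, tsub_le_iff_right]
  calc μ s ≤ μ (s ∩ t) + μ (s \ t) := measure_le_inter_add_sdiff μ s t
    _ ≤ μ t + ENNReal.ofReal δ * μ s := by gcongr; exact Set.inter_subset_right

section InnerProductSpace

variable {E : Type*} [NormedAddCommGroup E] [InnerProductSpace ℝ E]

theorem norm_sq_smul_sub_inner_smul_add_smul {u : E} (hu : ‖u‖ = 1) (x : E) (a b : ℝ) :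
    ‖a • (x - ⟪x, u⟫ • u) + b • u‖ ^ 2 = a ^ 2 * (‖x‖ ^ 2 - ⟪x, u⟫ ^ 2) + b ^ 2 := by
  have huu : ⟪u, u⟫ = 1 := inner_self_eq_one_of_norm_eq_one hu
  rw [← real_inner_self_eq_norm_sq, ← real_inner_self_eq_norm_sq]
  simp only [inner_add_left, inner_add_right, inner_sub_left, inner_sub_right,
    real_inner_smul_left, real_inner_smul_right, huu, real_inner_comm x u]
  ring

theorem inner_smul_sub_inner_smul_add_smul {u : E} (hu : ‖u‖ = 1) (x : E) (a b : ℝ) :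
    ⟪a • (x - ⟪x, u⟫ • u) + b • u, u⟫ = b := by
  simp [inner_add_left, inner_sub_left, real_inner_smul_left, hu]

section Cap

/-- The open spherical cap around `u`, cut out of the unit sphere by the half space `s < ⟪x, u⟫`;
for `s = 0` it is the open half sphere around `u`. -/
def openCap (u : E) (s : ℝ) : Set E :=
  {x ∈ Metric.sphere (0 : E) 1 | s < ⟪x, u⟫}

theorem measurableSet_openCap [MeasurableSpace E] [BorelSpace E] (u : E) (s : ℝ) :
    MeasurableSet (openCap u s) :=
  Metric.isClosed_sphere.measurableSet.inter
    (isOpen_lt continuous_const (by fun_prop : Continuous fun x : E => ⟪x, u⟫)).measurableSet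

theorem hausdorffMeasure_openCap_neg [MeasurableSpace E] [BorelSpace E] (u : E) (s d : ℝ) :
    μH[d] (openCap (-u) s) = μH[d] (openCap u s) := by
  rw [← (IsometryEquiv.neg E).hausdorffMeasure_preimage d (openCap u s)]
  congr 1
  ext x
  simp [openCap]

theorem disjoint_openCap_zero_neg (u : E) : Disjoint (openCap u 0) (openCap (-u) 0) := by
  refine Set.disjoint_left.2 fun x ⟨_, hx⟩ ⟨_, hx'⟩ => ?_
  rw [inner_neg_right] at hx'
  linarith

theorem hausdorffMeasure_openCap_zero_le [MeasurableSpace E] [BorelSpace E] (u : E) (d : ℝ) :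
    μH[d] (openCap u 0) ≤ 2⁻¹ * μH[d] (Metric.sphere (0 : E) 1) := by
  refine (ENNReal.mul_le_iff_le_inv two_ne_zero ENNReal.ofNat_ne_top).1 ?_
  calc 2 * μH[d] (openCap u 0)
      = μH[d] (openCap u 0) + μH[d] (openCap (-u) 0) := by
        rw [hausdorffMeasure_openCap_neg, two_mul]
    _ = μH[d] (openCap u 0 ∪ openCap (-u) 0) :=
        (measure_union (disjoint_openCap_zero_neg u) (measurableSet_openCap _ _)).symm
    _ ≤ μH[d] (Metric.sphere (0 : E) 1) :=
        measure_mono (Set.union_subset (Set.sep_subset _ _) (Set.sep_subset _ _))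

/-- The map scaling the component orthogonal to the unit vector `u` by `c` and replacing the
coordinate `t` along `u` by `√(s ^ 2 + (c * t) ^ 2)`. When `s ^ 2 + c ^ 2 = 1` it preserves the unit
sphere and contracts the half sphere around `u` onto the cap of height `s`. -/
noncomputable def capContraction (u : E) (c s : ℝ) (x : E) : E :=
  c • (x - ⟪x, u⟫ • u) + √(s ^ 2 + (c * ⟪x, u⟫) ^ 2) • u

theorem lipschitzWith_capContraction {u : E} (hu : ‖u‖ = 1) (c : NNReal) (s : ℝ) :
    LipschitzWith c (capContraction u c s) := by
  refine LipschitzWith.of_dist_le_mul fun x y => ?_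
  set b := √(s ^ 2 + (c * ⟪x, u⟫) ^ 2) - √(s ^ 2 + (c * ⟪y, u⟫) ^ 2) with hb
  have map_sub : capContraction u c s x - capContraction u c s y =
      (c : ℝ) • ((x - y) - ⟪x - y, u⟫ • u) + b • u := by
    rw [capContraction, capContraction, inner_sub_left, hb]
    module
  have b_sq_le : b ^ 2 ≤ (c * ⟪x - y, u⟫) ^ 2 := by
    rw [inner_sub_left, mul_sub]
    exact sq_le_sq.2 (abs_sqrt_sq_add_sq_sub_le s _ _)
  rw [dist_eq_norm, dist_eq_norm, map_sub]
  refine le_of_sq_le_sq ?_ (by positivity)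
  rw [norm_sq_smul_sub_inner_smul_add_smul hu]
  linarith

theorem openCap_subset_image_capContraction {u : E} (hu : ‖u‖ = 1) {c s : ℝ} (hc : 0 < c)
    (hs : 0 ≤ s) (hsc : s ^ 2 + c ^ 2 = 1) :
    openCap u s ⊆ capContraction u c s '' openCap u 0 := by
  rintro x ⟨hx, hsx : s < ⟪x, u⟫⟩
  rw [mem_sphere_zero_iff_norm] at hx
  have ht : 0 < ⟪x, u⟫ ^ 2 - s ^ 2 := by nlinarith
  set r := √(⟪x, u⟫ ^ 2 - s ^ 2) / c with hr
  have hcr : (c * r) ^ 2 = ⟪x, u⟫ ^ 2 - s ^ 2 := by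
    rw [hr, mul_div_cancel₀ _ hc.ne', sq_sqrt ht.le]
  have inner_preimage : ⟪c⁻¹ • (x - ⟪x, u⟫ • u) + r • u, u⟫ = r :=
    inner_smul_sub_inner_smul_add_smul hu x _ _
  refine ⟨c⁻¹ • (x - ⟪x, u⟫ • u) + r • u, ⟨?_, ?_⟩, ?_⟩
  · rw [mem_sphere_zero_iff_norm, ← pow_eq_one_iff_of_nonneg (norm_nonneg _) two_ne_zero,
      norm_sq_smul_sub_inner_smul_add_smul hu, hx]
    field_simp
    linarith
  · rw [inner_preimage]
    positivity
  · rw [capContraction, inner_preimage, hcr, add_sub_cancel_right, add_sub_cancel,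
      sqrt_sq (hs.trans hsx.le), smul_inv_smul₀ hc.ne', sub_add_cancel]

theorem hausdorffMeasure_openCap_le [MeasurableSpace E] [BorelSpace E] {u : E} (hu : ‖u‖ = 1)
    {c s d : ℝ} (hc : 0 < c) (hs : 0 ≤ s) (hsc : s ^ 2 + c ^ 2 = 1) (hd : 0 ≤ d) :
    μH[d] (openCap u s) ≤ ENNReal.ofReal c ^ d * (2⁻¹ * μH[d] (Metric.sphere (0 : E) 1)) := by
  have hlip := lipschitzWith_capContraction hu c.toNNReal s
  rw [coe_toNNReal c hc.le] at hlip
  calc μH[d] (openCap u s)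
      ≤ μH[d] (capContraction u c s '' openCap u 0) :=
        measure_mono (openCap_subset_image_capContraction hu hc hs hsc)
    _ ≤ ENNReal.ofReal c ^ d * μH[d] (openCap u 0) := hlip.hausdorffMeasure_image_le hd _
    _ ≤ _ := by gcongr; exact hausdorffMeasure_openCap_zero_le u d

end Cap

section SphereMeasure

theorem norm_stereoToFun_le_two {v x : E} (hx : ‖x‖ ≤ 1) (hxv : ⟪v, x⟫ ≤ 0) :
    ‖stereoToFun v x‖ ≤ 2 := by
  have norm_coeff_le : ‖2 / (1 - ⟪v, x⟫)‖ ≤ 2 := by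
    rw [norm_of_nonneg (div_nonneg zero_le_two (by linarith)), div_le_iff₀ (by linarith)]
    linarith
  have norm_proj_le := ((ℝ ∙ v)ᗮ.norm_orthogonalProjectionOnto_apply_le x).trans hx
  rw [stereoToFun_apply, norm_smul, innerSL_apply_apply]
  simpa using mul_le_mul norm_coeff_le norm_proj_le (norm_nonneg _) zero_le_two

theorem halfSphere_subset_image_stereoInvFunAux {v : E} (hv : ‖v‖ = 1) :
    {x ∈ Metric.sphere (0 : E) 1 | ⟪v, x⟫ ≤ 0} ⊆
      (fun w : (ℝ ∙ v)ᗮ => stereoInvFunAux v w) '' Metric.closedBall 0 2 := by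
  rintro x ⟨hx, hxv⟩
  have x_ne_v : x ≠ v := by
    rintro rfl
    rw [inner_self_eq_one_of_norm_eq_one hv] at hxv
    exact absurd hxv (by norm_num)
  refine ⟨stereoToFun v x, ?_, congrArg Subtype.val (stereo_left_inv hv (x := ⟨x, hx⟩) x_ne_v)⟩
  rw [mem_sphere_zero_iff_norm] at hx
  exact mem_closedBall_zero_iff.2 (norm_stereoToFun_le_two hx.le hxv)

theorem closedBall_subset_image_orthogonalProjectionOnto_sphere {v : E} (hv : ‖v‖ = 1) :
    Metric.closedBall 0 1 ⊆ (ℝ ∙ v)ᗮ.orthogonalProjectionOnto '' Metric.sphere (0 : E) 1 := by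
  intro w hw
  rw [mem_closedBall_zero_iff] at hw
  have hwv : ⟪(w : E), v⟫ = 0 := Submodule.mem_orthogonal_singleton_iff_inner_left.1 w.2
  refine ⟨w + √(1 - ‖w‖ ^ 2) • v, ?_, ?_⟩
  · have norm_sq := norm_sq_smul_sub_inner_smul_add_smul hv (w : E) 1 √(1 - ‖w‖ ^ 2)
    rw [hwv, zero_smul, sub_zero, one_smul, sq_sqrt (by nlinarith [norm_nonneg w])] at norm_sq
    rw [mem_sphere_zero_iff_norm, ← pow_eq_one_iff_of_nonneg (norm_nonneg _) two_ne_zero, norm_sq]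
    simp
  · rw [map_add, map_smul,
      Submodule.orthogonalProjectionOnto_orthogonalComplement_singleton_eq_zero, smul_zero,
      add_zero, Submodule.orthogonalProjectionOnto_mem_subspace_eq_self]

variable [MeasurableSpace E] [BorelSpace E] {d : ℕ} [Fact (Module.finrank ℝ E = d + 1)]

theorem hausdorffMeasure_halfSphere_lt_top {v : E} (hv : ‖v‖ = 1) :
    μH[d] {x ∈ Metric.sphere (0 : E) 1 | ⟪v, x⟫ ≤ 0} < ⊤ := by
  have : FiniteDimensional ℝ E := .of_fact_finrank_eq_succ d
  have finrank_orthogonal : Module.finrank ℝ (ℝ ∙ v)ᗮ = d :=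
    Submodule.finrank_orthogonal_span_singleton (ne_zero_of_norm_ne_zero (by simp [hv]))
  have hsmooth : ContDiff ℝ 1 (fun w : (ℝ ∙ v)ᗮ => stereoInvFunAux v w) :=
    contDiff_stereoInvFunAux.comp (ℝ ∙ v)ᗮ.subtypeL.contDiff
  have hcompact := isCompact_closedBall (0 : (ℝ ∙ v)ᗮ) 2
  obtain ⟨C, hC⟩ := hsmooth.locallyLipschitz.locallyLipschitzOn.exists_lipschitzOnWith_of_compact
    hcompact
  have measure_closedBall : μH[d] (Metric.closedBall (0 : (ℝ ∙ v)ᗮ) 2) < ⊤ := by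
    rw [← finrank_orthogonal]
    exact hcompact.measure_lt_top
  calc μH[d] {x ∈ Metric.sphere (0 : E) 1 | ⟪v, x⟫ ≤ 0}
      ≤ μH[d] ((fun w : (ℝ ∙ v)ᗮ => stereoInvFunAux v w) '' Metric.closedBall 0 2) :=
        measure_mono (halfSphere_subset_image_stereoInvFunAux hv)
    _ ≤ C ^ (d : ℝ) * μH[d] (Metric.closedBall (0 : (ℝ ∙ v)ᗮ) 2) :=
        hC.hausdorffMeasure_image_le d.cast_nonneg
    _ < ⊤ := ENNReal.mul_lt_top
        (ENNReal.rpow_lt_top_of_nonneg d.cast_nonneg ENNReal.coe_ne_top) measure_closedBall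

variable (E d)

theorem hausdorffMeasure_sphere_lt_top : μH[d] (Metric.sphere (0 : E) 1) < ⊤ := by
  have : Nontrivial E :=
    Module.nontrivial_of_finrank_eq_succ (Fact.out : Module.finrank ℝ E = d + 1)
  obtain ⟨v, hv⟩ := exists_norm_eq E zero_le_one
  have sphere_subset : Metric.sphere (0 : E) 1 ⊆
      {x ∈ Metric.sphere (0 : E) 1 | ⟪v, x⟫ ≤ 0} ∪ {x ∈ Metric.sphere (0 : E) 1 | ⟪-v, x⟫ ≤ 0} := by
    intro x hx
    rcases le_total ⟪v, x⟫ 0 with h | h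
    · exact .inl ⟨hx, h⟩
    · exact .inr ⟨hx, by simpa using h⟩
  exact (measure_mono sphere_subset).trans_lt (measure_union_lt_top
    (hausdorffMeasure_halfSphere_lt_top hv)
    (hausdorffMeasure_halfSphere_lt_top (by rwa [norm_neg])))

theorem hausdorffMeasure_sphere_pos : 0 < μH[d] (Metric.sphere (0 : E) 1) := by
  have : Nontrivial E :=
    Module.nontrivial_of_finrank_eq_succ (Fact.out : Module.finrank ℝ E = d + 1)
  obtain ⟨v, hv⟩ := exists_norm_eq E zero_le_one
  have : FiniteDimensional ℝ E := .of_fact_finrank_eq_succ d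
  have finrank_orthogonal : Module.finrank ℝ (ℝ ∙ v)ᗮ = d :=
    Submodule.finrank_orthogonal_span_singleton (ne_zero_of_norm_ne_zero (by simp [hv]))
  calc 0 < μH[d] (Metric.closedBall (0 : (ℝ ∙ v)ᗮ) 1) := by
        rw [← finrank_orthogonal]
        exact Metric.measure_closedBall_pos _ _ one_pos
    _ ≤ μH[d] ((ℝ ∙ v)ᗮ.orthogonalProjectionOnto '' Metric.sphere (0 : E) 1) :=
        measure_mono (closedBall_subset_image_orthogonalProjectionOnto_sphere hv)
    _ ≤ μH[d] (Metric.sphere (0 : E) 1) := by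
        simpa using (ℝ ∙ v)ᗮ.lipschitzWith_orthogonalProjectionOnto.hausdorffMeasure_image_le
          d.cast_nonneg (Metric.sphere (0 : E) 1)

end SphereMeasure

section Thickening

/-- The geodesic `ε`-expansion, within the unit sphere, of the closed half sphere around `v`. The
geodesic distance of unit vectors `x` and `y` is `arccos ⟪x, y⟫`. -/
def halfSphereThickening (v : E) (ε : ℝ) : Set E :=
  {x ∈ Metric.sphere (0 : E) 1 |
    ∃ y ∈ Metric.sphere (0 : E) 1, ⟪y, v⟫ ≥ 0 ∧ arccos ⟪x, y⟫ ≤ ε}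

variable {v x : E} {ε : ℝ}

theorem mem_halfSphereThickening_of_inner_nonneg (hε : 0 ≤ ε) (hx : ‖x‖ = 1) (hxv : 0 ≤ ⟪x, v⟫) :
    x ∈ halfSphereThickening v ε := by
  have x_mem := mem_sphere_zero_iff_norm.2 hx
  refine ⟨x_mem, x, x_mem, hxv, ?_⟩
  rwa [inner_self_eq_one_of_norm_eq_one hx, arccos_one]

theorem mem_halfSphereThickening_of_neg_sin_le_inner (hv : ‖v‖ = 1) (hε : 0 ≤ ε)
    (hε' : ε < π / 2) (hx : ‖x‖ = 1) (hxv : -sin ε ≤ ⟪x, v⟫) :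
    x ∈ halfSphereThickening v ε := by
  rcases le_or_gt 0 ⟪x, v⟫ with h | h
  · exact mem_halfSphereThickening_of_inner_nonneg hε hx h
  have cos_pos : 0 < cos ε := cos_pos_of_mem_Ioo ⟨by linarith [pi_pos], hε'⟩
  have cos_sq_le : cos ε ^ 2 ≤ 1 - ⟪x, v⟫ ^ 2 := by nlinarith [sin_sq_add_cos_sq ε]
  set r := √(1 - ⟪x, v⟫ ^ 2)
  have r_sq : r ^ 2 = 1 - ⟪x, v⟫ ^ 2 := sq_sqrt ((sq_nonneg _).trans cos_sq_le)
  have cos_le_r : cos ε ≤ r := le_sqrt_of_sq_le cos_sq_le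
  have r_pos : 0 < r := cos_pos.trans_le cos_le_r
  -- The nearest point of the half sphere is the normalized projection of `x` to `(ℝ ∙ v)ᗮ`.
  refine ⟨mem_sphere_zero_iff_norm.2 hx, r⁻¹ • (x - ⟪x, v⟫ • v) + (0 : ℝ) • v, ?_, ?_, ?_⟩
  · rw [mem_sphere_zero_iff_norm, ← pow_eq_one_iff_of_nonneg (norm_nonneg _) two_ne_zero,
      norm_sq_smul_sub_inner_smul_add_smul hv, hx, one_pow, ← r_sq]
    field_simp
    simp
  · exact (inner_smul_sub_inner_smul_add_smul hv x _ _).ge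
  · have inner_eq : ⟪x, r⁻¹ • (x - ⟪x, v⟫ • v) + (0 : ℝ) • v⟫ = r := by
      rw [zero_smul, add_zero, real_inner_smul_right, inner_sub_right, real_inner_smul_right,
        inner_self_eq_one_of_norm_eq_one hx, ← sq, ← r_sq, sq, inv_mul_cancel_left₀ r_pos.ne']
    rw [inner_eq, ← arccos_cos hε (by linarith [pi_pos])]
    exact antitone_arccos cos_le_r

theorem exists_norm_eq_one_inner_eq_zero (hE : 1 < Module.finrank ℝ E) (x : E) :
    ∃ y : E, ‖y‖ = 1 ∧ ⟪x, y⟫ = 0 := by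
  have : Nontrivial (ℝ ∙ x)ᗮ := by
    rw [Submodule.nontrivial_iff_ne_bot, Ne, Submodule.orthogonal_eq_bot_iff]
    intro span_eq_top
    have finrank_span_le := finrank_span_le_card (R := ℝ) {x}
    rw [span_eq_top, finrank_top] at finrank_span_le
    exact absurd hE (by simpa using finrank_span_le)
  obtain ⟨y, hy⟩ := exists_norm_eq (ℝ ∙ x)ᗮ zero_le_one
  exact ⟨y, hy, Submodule.mem_orthogonal_singleton_iff_inner_right.1 y.2⟩

theorem sphere_subset_halfSphereThickening (hE : 1 < Module.finrank ℝ E) (v : E)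
    (hε : π / 2 ≤ ε) : Metric.sphere (0 : E) 1 ⊆ halfSphereThickening v ε := by
  intro x hx
  obtain ⟨y, hy, hxy⟩ := exists_norm_eq_one_inner_eq_zero hE x
  -- `y` and `-y` are both at geodesic distance `π / 2` from `x`, and one is in the half sphere.
  rcases le_total 0 ⟪y, v⟫ with h | h
  · exact ⟨hx, y, mem_sphere_zero_iff_norm.2 hy, h, by rwa [hxy, arccos_zero]⟩
  · exact ⟨hx, -y, by simpa using hy, by simpa using h,
      by rwa [inner_neg_right, hxy, neg_zero, arccos_zero]⟩

theorem sphere_diff_halfSphereThickening_subset_openCap_zero (v : E) (hε : 0 ≤ ε) :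
    Metric.sphere (0 : E) 1 \ halfSphereThickening v ε ⊆ openCap (-v) 0 := by
  rintro x ⟨hx, hxv⟩
  refine ⟨hx, ?_⟩
  contrapose! hxv
  rw [inner_neg_right, neg_nonpos] at hxv
  exact mem_halfSphereThickening_of_inner_nonneg hε (mem_sphere_zero_iff_norm.1 hx) hxv

theorem sphere_diff_halfSphereThickening_subset_openCap_sin (hv : ‖v‖ = 1) (hε : 0 ≤ ε)
    (hε' : ε < π / 2) :
    Metric.sphere (0 : E) 1 \ halfSphereThickening v ε ⊆ openCap (-v) (sin ε) := by
  rintro x ⟨hx, hxv⟩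
  refine ⟨hx, ?_⟩
  contrapose! hxv
  rw [inner_neg_right, neg_le] at hxv
  exact mem_halfSphereThickening_of_neg_sin_le_inner hv hε hε' (mem_sphere_zero_iff_norm.1 hx) hxv

variable [MeasurableSpace E] [BorelSpace E]

theorem hausdorffMeasure_sphere_diff_halfSphereThickening_le_of_lt (hv : ‖v‖ = 1) (hε : 0 ≤ ε)
    (hε' : ε < π / 2) {d : ℝ} (hd : 0 ≤ d) :
    μH[d] (Metric.sphere (0 : E) 1 \ halfSphereThickening v ε) ≤
      ENNReal.ofReal (exp (-d / 2 * ε ^ 2)) * (2⁻¹ * μH[d] (Metric.sphere (0 : E) 1)) := by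
  have cos_pos : 0 < cos ε := cos_pos_of_mem_Ioo ⟨by linarith [pi_pos], hε'⟩
  have sin_nonneg : 0 ≤ sin ε := sin_nonneg_of_nonneg_of_le_pi hε (by linarith [pi_pos])
  have cos_rpow_le : cos ε ^ d ≤ exp (-d / 2 * ε ^ 2) :=
    calc cos ε ^ d ≤ exp (-(ε ^ 2 / 2)) ^ d := by
          gcongr
          exact cos_le_exp_neg_sq_div_two (by rw [abs_of_nonneg hε]; exact hε'.le)
      _ = exp (-d / 2 * ε ^ 2) := by rw [← exp_mul]; ring_nf
  calc μH[d] (Metric.sphere (0 : E) 1 \ halfSphereThickening v ε)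
      ≤ μH[d] (openCap (-v) (sin ε)) :=
        measure_mono (sphere_diff_halfSphereThickening_subset_openCap_sin hv hε hε')
    _ ≤ ENNReal.ofReal (cos ε) ^ d * (2⁻¹ * μH[d] (Metric.sphere (0 : E) 1)) :=
        hausdorffMeasure_openCap_le (by rwa [norm_neg]) cos_pos sin_nonneg
          (sin_sq_add_cos_sq ε) hd
    _ ≤ _ := by
        rw [ENNReal.ofReal_rpow_of_pos cos_pos]
        gcongr

theorem hausdorffMeasure_sphere_diff_halfSphereThickening_le {d : ℕ}
    [hd : Fact (Module.finrank ℝ E = d + 1)] (hv : ‖v‖ = 1) (hε : 0 ≤ ε) :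
    μH[d] (Metric.sphere (0 : E) 1 \ halfSphereThickening v ε) ≤
      ENNReal.ofReal (exp (-d / 2 * ε ^ 2)) * (2⁻¹ * μH[d] (Metric.sphere (0 : E) 1)) := by
  rcases lt_or_ge ε (π / 2) with hε' | hε'
  · exact hausdorffMeasure_sphere_diff_halfSphereThickening_le_of_lt hv hε hε' d.cast_nonneg
  rcases d.eq_zero_or_pos with rfl | d_pos
  · simpa using (measure_mono (sphere_diff_halfSphereThickening_subset_openCap_zero v hε)).trans
      (hausdorffMeasure_openCap_zero_le (-v) 0)
  · have hE : 1 < Module.finrank ℝ E := by rw [hd.out]; lia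
    simp [Set.sdiff_eq_empty.2 (sphere_subset_halfSphereThickening hE v hε')]

end Thickening

theorem half_sphere_expansion_general [FiniteDimensional ℝ E] [MeasurableSpace E] [BorelSpace E]
    {v : E} (hv : ‖v‖ = 1) {ε : ℝ} (hε : 0 ≤ ε) :
    ENNReal.ofReal (1 - 2⁻¹ * exp (-((Module.finrank ℝ E : ℝ) - 1) / 2 * ε ^ 2)) ≤
      μH[(Module.finrank ℝ E : ℝ) - 1] (halfSphereThickening v ε) /
        μH[(Module.finrank ℝ E : ℝ) - 1] (Metric.sphere (0 : E) 1) := by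
  have : Nontrivial E := ⟨v, 0, ne_zero_of_norm_ne_zero (by simp [hv])⟩
  obtain ⟨d, hd⟩ := Nat.exists_eq_succ_of_ne_zero (Module.finrank_pos (R := ℝ) (M := E)).ne'
  have : Fact (Module.finrank ℝ E = d + 1) := ⟨hd⟩
  have finrank_sub_one : (Module.finrank ℝ E : ℝ) - 1 = d := by simp [hd]
  rw [finrank_sub_one]
  refine ofReal_one_sub_le_measure_div (by positivity) (hausdorffMeasure_sphere_pos E d).ne'
    (hausdorffMeasure_sphere_lt_top E d).ne
    ((hausdorffMeasure_sphere_diff_halfSphereThickening_le hv hε).trans_eq ?_)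
  rw [mul_comm (2⁻¹ : ℝ), ENNReal.ofReal_mul (exp_pos _).le, mul_assoc,
    ENNReal.ofReal_inv_of_pos two_pos, ENNReal.ofReal_ofNat]

end InnerProductSpace

theorem half_sphere_expansion (n : ℕ) (ε : ℝ) (hε : 0 ≤ ε)
    (v : EuclideanSpace ℝ (Fin n)) (hv : ‖v‖ = 1) :
    -- normalized measure of the geodesic ε-expansion of the half sphere {x : ⟪x,v⟫ ≥ 0}
    μH[(n : ℝ) - 1] {x ∈ Metric.sphere (0 : EuclideanSpace ℝ (Fin n)) 1 |
        ∃ y ∈ Metric.sphere (0 : EuclideanSpace ℝ (Fin n)) 1,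
          ⟪y, v⟫ ≥ 0 ∧ Real.arccos ⟪x, y⟫ ≤ ε} /
      μH[(n : ℝ) - 1] (Metric.sphere (0 : EuclideanSpace ℝ (Fin n)) 1) ≥
      ENNReal.ofReal
        (1 - Real.sqrt (Real.pi / 8) * Real.exp (-((n : ℝ) - 1) / 2 * ε ^ 2)) := by
  have h := finrank_euclideanSpace_fin (𝕜 := ℝ) (n := n) ▸ half_sphere_expansion_general hv hε
  exact le_trans (by gcongr; exact one_half_le_sqrt_pi_div_eight) h
end
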